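/- arXiv:1602.09119 — 2 statements merged into one kernel-verified Lean document; each statement's English description precedes it below -/
import Mathlib

section
/- The polynomials x⁷ − 7x + 3 and x⁸ − 4x⁷ + 7x⁶ − 7x⁵ + 7x⁴ − 7x³ + 7x² + 5x + 1 are irreducible over ℚ and have isomorphic splitting fields over ℚ; their common Galois group is isomorphic to PSL₂(𝔽₇). -/
open Polynomial
open scoped MatrixGroups

noncomputable section

/-- The Trinks polynomial `x⁷ − 7x + 3`. -/
def f13a : ℚ[X] := X ^ 7 - 7 * X + 3

def f13b : ℚ[X] :=
  X ^ 8 - 4 * X ^ 7 + 7 * X ^ 6 - 7 * X ^ 5 + 7 * X ^ 4 - 7 * X ^ 3 + 7 * X ^ 2 + 5 * X + 1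

/-!
Over `ℚ(β)`, where `β` is a root of a degree seven resolvent, `x⁷ − 7x + 3` has a cubic factor. The
seven factors obtained in this way group the seven roots into seven triples permuted by the Galois
group, the lines of a Fano plane. If `t` is a root of the octic, the square root of the discriminant
of the cubic factor lies in `ℚ(β, t)`; as a polynomial in `β` it determines `t`, so `t` is
recovered by interpolation from the differences of the roots of the septic, and the octic splits
in the splitting field `L` of the septic. Both polynomials are irreducible by Eisenstein-type
arguments at `7`, hence `56 ∣ [L : ℚ]`. A group of permutations of seven points whose order is
divisible by `56` and which preserves seven triples must preserve a Fano plane, and it has index at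
most `3` in the simple collineation group `PSL(2, 𝔽₇)`, so it is all of it. By simplicity the
octic generates all of `L`.
-/

/-! ### Irreducibility modulo the square of a prime -/

section EisensteinType

variable {R k : Type*} [CommRing R] [Field k] {φ : R →+* k} {F p q : R[X]} {c : R} {n : ℕ}
  {r : k[X]}

lemma map_dvd_or_map_dvd_of_mul_eq (hmap : F.map φ = (X - C (φ c)) ^ n * r)
    (hc : F.eval c ∉ RingHom.ker φ ^ 2) (hpq : p * q = F) : p.map φ ∣ r ∨ q.map φ ∣ r := by
  have map_dvd_of_eval_ne {s : R[X]} (hs : s ∣ F) (hne : φ (s.eval c) ≠ 0) : s.map φ ∣ r := by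
    have hcop : IsCoprime ((X - C (φ c)) ^ n) (s.map φ) := by
      refine IsCoprime.pow_left ((irreducible_X_sub_C _).coprime_iff_not_dvd.2 fun h ↦ hne ?_)
      rwa [dvd_iff_isRoot, IsRoot, eval_map_apply] at h
    exact hcop.symm.dvd_of_dvd_mul_left (hmap ▸ map_dvd φ hs)
  by_contra! h
  refine hc ?_
  rw [← hpq, eval_mul, sq]
  refine Ideal.mul_mem_mul ?_ ?_
  · exact not_not.1 fun hp ↦ h.1 (map_dvd_of_eval_ne ⟨q, hpq.symm⟩ hp)
  · exact not_not.1 fun hq ↦ h.2 (map_dvd_of_eval_ne ⟨p, by rw [← hpq, mul_comm]⟩ hq)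

lemma irreducible_of_map_eq_pow_mul [IsDomain R] (hF : F.Monic) (hn : n ≠ 0)
    (hmap : F.map φ = (X - C (φ c)) ^ n * r) (hc : F.eval c ∉ RingHom.ker φ ^ 2)
    (hr : ∀ p : R[X], p.Monic → p ∣ F → p.natDegree ≤ r.natDegree → p.natDegree = 0) :
    Irreducible F := by
  have hr0 : r ≠ 0 := by
    rintro rfl
    exact (hF.map φ).ne_zero (by rw [hmap, mul_zero])
  have natDegree_eq_zero {p : R[X]} (hp : p.Monic) (hpF : p ∣ F) (hpr : p.map φ ∣ r) :
      p.natDegree = 0 :=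
    hr p hp hpF (hp.natDegree_map φ ▸ natDegree_le_of_dvd hpr hr0)
  have hF1 : F ≠ 1 := by
    rintro rfl
    rw [Polynomial.map_one] at hmap
    exact not_isUnit_X_sub_C (φ c)
      (isUnit_of_dvd_one ((dvd_pow_self _ hn).trans (hmap ▸ dvd_mul_right _ r)))
  refine hF.irreducible_iff_natDegree.2 ⟨hF1, fun p q hp hq hpq ↦ ?_⟩
  rcases map_dvd_or_map_dvd_of_mul_eq hmap hc hpq with h | h
  · exact .inl (natDegree_eq_zero hp ⟨q, hpq.symm⟩ h)
  · exact .inr (natDegree_eq_zero hq ⟨p, by rw [← hpq, mul_comm]⟩ h)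

lemma irreducible_of_map_eq_pow [IsDomain R] (hF : F.Monic) (hn : n ≠ 0)
    (hmap : F.map φ = (X - C (φ c)) ^ n) (hc : F.eval c ∉ RingHom.ker φ ^ 2) : Irreducible F :=
  irreducible_of_map_eq_pow_mul hF hn (hmap.trans (mul_one _).symm) hc fun p _ _ hp ↦ by
    simpa using hp

lemma irreducible_of_map_eq_pow_mul_X_sub_C [IsDomain R] {d : k} (hF : F.Monic) (hn : n ≠ 0)
    (hmap : F.map φ = (X - C (φ c)) ^ n * (X - C d)) (hc : F.eval c ∉ RingHom.ker φ ^ 2)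
    (hroot : ∀ x, ¬ F.IsRoot x) : Irreducible F := by
  refine irreducible_of_map_eq_pow_mul hF hn hmap hc fun p hp hpF hdeg ↦ ?_
  rw [natDegree_X_sub_C] at hdeg
  by_contra h0
  have hpX : p = X - C (-p.coeff 0) := by
    rw [hp.eq_X_add_C (by lia), map_neg, sub_neg_eq_add]; simp
  rw [hpX, dvd_iff_isRoot] at hpF
  exact hroot _ hpF

end EisensteinType

lemma mem_ker_castRingHom_sq {p : ℕ} {m : ℤ} :
    m ∈ RingHom.ker (Int.castRingHom (ZMod p)) ^ 2 ↔ (p : ℤ) ^ 2 ∣ m := by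
  rw [ZMod.ker_intCastRingHom, Ideal.span_singleton_pow, Ideal.mem_span_singleton]

section Rat

variable {p n : ℕ} [Fact p.Prime] {F : ℤ[X]} {c : ℤ}

lemma irreducible_map_rat_of_map_zmod_eq_pow (hF : F.Monic) (hn : n ≠ 0)
    (hmap : F.map (Int.castRingHom (ZMod p)) = (X - C (c : ZMod p)) ^ n)
    (hc : ¬ (p : ℤ) ^ 2 ∣ F.eval c) : Irreducible (F.map (algebraMap ℤ ℚ)) :=
  hF.irreducible_iff_irreducible_map_fraction_map.1 <|
    irreducible_of_map_eq_pow hF hn hmap (mt mem_ker_castRingHom_sq.1 hc)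

lemma irreducible_map_rat_of_map_zmod_eq_pow_mul_X_sub_C {d : ZMod p} (hF : F.Monic) (hn : n ≠ 0)
    (hmap : F.map (Int.castRingHom (ZMod p)) = (X - C (c : ZMod p)) ^ n * (X - C d))
    (hc : ¬ (p : ℤ) ^ 2 ∣ F.eval c) (hroot : ∀ x, ¬ F.IsRoot x) :
    Irreducible (F.map (algebraMap ℤ ℚ)) :=
  hF.irreducible_iff_irreducible_map_fraction_map.1 <|
    irreducible_of_map_eq_pow_mul_X_sub_C hF hn hmap (mt mem_ker_castRingHom_sq.1 hc) hroot

end Rat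

/-! ### The resolvent and its cubic factors -/

section Resolvent

/-- A resolvent of the Trinks polynomial: its roots are the seven numbers `-1 - xyz`, where
`{x, y, z}` runs over the lines of the Fano plane formed by the roots of `f13a`. -/
def fanoResolvent : ℚ[X] := X ^ 7 + 7 * X ^ 4 - 21 * X ^ 3 - 21 * X ^ 2 + 42 * X + 9

/-- The cubic polynomial whose roots are the points of the line of roots of `f13a` attached to the
root `β` of `fanoResolvent`; it is a factor of `f13a` over `ℚ(β)`. -/
def lineCubic {K : Type*} [Field K] (β : K) : Cubic K where
  a := 1
  b := 1 + 17 / 3 * β - 4 * β ^ 2 - 2 / 3 * β ^ 3 + 4 / 9 * β ^ 4 - 4 / 9 * β ^ 5 + 1 / 9 * β ^ 6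
  c := -3 - 5 * β + 2 * β ^ 2 + 2 / 3 * β ^ 3 + 1 / 3 * β ^ 5
  d := 1 + β

/-- For a root `t` of `f13b`, the polynomial whose value at each root `β` of `fanoResolvent` is, up
to sign and the factor `discrMultiplier β`, the square root of the discriminant of `lineCubic β`. -/
def discrRoot {K : Type*} [Field K] (t : K) : K[X] :=
  C (6 * t ^ 7 - 18 * t ^ 6 + 24 * t ^ 5 - 30 * t ^ 4 + 42 * t ^ 3 - 30 * t ^ 2 + 18 * t + 33) +
  C (12 * t ^ 7 - 40 * t ^ 6 + 76 * t ^ 5 - 136 * t ^ 4 + 152 * t ^ 3 - 104 * t ^ 2 + 152 * t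
    - 21) * X +
  C (-2 * t ^ 7 - 10 * t ^ 6 + 48 * t ^ 5 - 46 * t ^ 4 + 50 * t ^ 3 - 78 * t ^ 2 + 46 * t
    - 21) * X ^ 2 +
  C (-12 * t ^ 7 + 52 * t ^ 6 - 108 * t ^ 5 + 132 * t ^ 4 - 132 * t ^ 3 + 124 * t ^ 2 - 132 * t
    - 23) * X ^ 3 +
  C (-4 * t ^ 7 + 20 * t ^ 6 - 42 * t ^ 5 + 46 * t ^ 4 - 48 * t ^ 3 + 46 * t ^ 2 - 38 * t
    - 10) * X ^ 4 +
  C (2 * t ^ 7 - 10 * t ^ 6 + 22 * t ^ 5 - 24 * t ^ 4 + 22 * t ^ 3 - 24 * t ^ 2 + 20 * t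
    + 7) * X ^ 5 +
  C (2 * t ^ 7 - 8 * t ^ 6 + 14 * t ^ 5 - 16 * t ^ 4 + 16 * t ^ 3 - 14 * t ^ 2 + 14 * t
    + 6) * X ^ 6

/-- The rational factor relating `discrRoot` to the discriminant of `lineCubic`. It is chosen, by
lattice reduction, to make the coefficients of `discrRoot` small integers. -/
def discrMultiplier {K : Type*} [Field K] (β : K) : K :=
  10 / 3 * β ^ 6 - 5 * β ^ 5 + 9 * β ^ 4 + 43 / 3 * β ^ 3 - 63 * β ^ 2 + 29 * β + 17

lemma degree_discrRoot_lt {K : Type*} [Field K] (t : K) : (discrRoot t).degree < 7 := by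
  unfold discrRoot
  compute_degree!

lemma combination_coeff_discrRoot {K : Type*} [Field K] [CharZero K] (t : K) :
    (-5 * (discrRoot t).coeff 0 - 4 * (discrRoot t).coeff 1 + (discrRoot t).coeff 2
      - 16 * (discrRoot t).coeff 3 + 4 * (discrRoot t).coeff 4 - 64 * (discrRoot t).coeff 5
      + 16 * (discrRoot t).coeff 6) / 252 + 1 / 2 = t := by
  simp only [discrRoot, coeff_add, coeff_C_mul, coeff_X_pow, coeff_X, coeff_C]
  norm_num
  ring

variable {K : Type*} [Field K] [Algebra ℚ K]

lemma aeval_f13a (x : K) : aeval x f13a = x ^ 7 - 7 * x + 3 := by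
  simp [f13a, map_ofNat]

lemma aeval_f13b (t : K) : aeval t f13b = t ^ 8 - 4 * t ^ 7 + 7 * t ^ 6 - 7 * t ^ 5 + 7 * t ^ 4
    - 7 * t ^ 3 + 7 * t ^ 2 + 5 * t + 1 := by
  simp [f13b, map_ofNat]

lemma aeval_fanoResolvent (β : K) :
    aeval β fanoResolvent = β ^ 7 + 7 * β ^ 4 - 21 * β ^ 3 - 21 * β ^ 2 + 42 * β + 9 := by
  simp [fanoResolvent, map_ofNat]

lemma lineCubic_toPoly_dvd {β : K} (hβ : aeval β fanoResolvent = 0) :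
    (lineCubic β).toPoly ∣ f13a.map (algebraMap ℚ K) := by
  have := algebraRat.charZero K
  rw [aeval_fanoResolvent] at hβ
  let cofactor : K[X] := X ^ 4 +
    C (-1 / 9 * β ^ 6 + 4 / 9 * β ^ 5 - 4 / 9 * β ^ 4 + 2 / 3 * β ^ 3 + 4 * β ^ 2 - 17 / 3 * β
      - 1) * X ^ 3 +
    C (1 / 9 * β ^ 6 + 2 / 9 * β ^ 5 + 1 / 9 * β ^ 4 + 4 / 3 * β ^ 3 - β ^ 2 - 16 / 3 * β
      + 1) * X ^ 2 +
    C (1 / 3 * β ^ 6 - 2 / 3 * β ^ 5 + β ^ 4 - 8 * β ^ 2 + 7 * β + 2) * X +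
    C (1 / 9 * β ^ 6 - 1 / 9 * β ^ 5 + 1 / 9 * β ^ 4 + 2 / 3 * β ^ 3 - 3 * β ^ 2 + 2 / 3 * β + 4)
  refine ⟨cofactor, Polynomial.funext fun x ↦ ?_⟩
  simp only [cofactor, lineCubic, Cubic.toPoly, eval_map_algebraMap, aeval_f13a, eval_add, eval_mul,
    eval_pow, eval_C, eval_X]
  linear_combination (
      (-1 / 9) +
      (-1 / 27 * β ^ 4 + 1 / 27 * β ^ 3 - 1 / 9 * β ^ 2 - 1 / 9 * β + 1 / 3) * x +
      (-1 / 81 * β ^ 5 - 4 / 81 * β ^ 4 + 1 / 9 * β ^ 3 - 10 / 27 * β ^ 2 + 22 / 27 * β + 1 / 9)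
        * x ^ 2 +
      (-1 / 27 * β ^ 5 + 5 / 27 * β ^ 4 - 17 / 27 * β ^ 3 + 10 / 9 * β ^ 2 - 14 / 9 * β - 2 / 9)
        * x ^ 3 +
      (-1 / 81 * β ^ 5 + 5 / 81 * β ^ 4 - 1 / 9 * β ^ 3 + 5 / 27 * β ^ 2 + 7 / 27 * β - 7 / 9) *
        x ^ 4 +
      (1 / 81 * β ^ 5 - 8 / 81 * β ^ 4 + 8 / 27 * β ^ 3 - 17 / 27 * β ^ 2 + 23 / 27 * β + 1 / 3)
        * x ^ 5) * hβ

lemma discr_lineCubic {β : K} (hβ : aeval β fanoResolvent = 0) :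
    (lineCubic β).discr = -14 / 9 * β ^ 6 + 35 / 9 * β ^ 5 - 56 / 9 * β ^ 4 + 14 / 3 * β ^ 3
      + 28 * β ^ 2 - 175 / 3 * β + 7 := by
  have := algebraRat.charZero K
  rw [aeval_fanoResolvent] at hβ
  simp only [lineCubic, Cubic.discr]
  linear_combination (
      1 / 729 * β ^ 15 - 8 / 729 * β ^ 14 + 28 / 729 * β ^ 13 - 25 / 243 * β ^ 12 + 29 / 243 * β ^
      11 + 133 / 729 * β ^ 10 - 523 / 729 * β ^ 9 + 1535 / 729 * β ^ 8 - 106 / 81 * β ^ 7 - 341 /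
      243 * β ^ 6 + 734 / 243 * β ^ 5 - 703 / 81 * β ^ 4 + 40 / 27 * β ^ 3 + 200 / 81 * β ^ 2 + 113
      / 27 * β + 25 / 9) * hβ

lemma discrMultiplier_sq_mul_discr_lineCubic {β : K} (hβ : aeval β fanoResolvent = 0) :
    discrMultiplier β ^ 2 * (lineCubic β).discr = 441 * (-8 * β ^ 6 + 27 * β ^ 5 + 66 * β ^ 4
      - 152 * β ^ 3 - 138 * β ^ 2 + 234 * β + 54) := by
  have := algebraRat.charZero K
  rw [discr_lineCubic hβ]
  rw [aeval_fanoResolvent] at hβ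
  simp only [discrMultiplier]
  linear_combination (
      -1400 / 81 * β ^ 11 + 7700 / 81 * β ^ 10 - 26810 / 81 * β ^ 9 + 56875 / 81 * β ^ 8 - 51016 /
      81 * β ^ 7 - 66983 / 81 * β ^ 6 + 37891 / 9 * β ^ 5 - 69167 / 9 * β ^ 4 + 147007 / 27 * β ^ 3
      + 1652 / 3 * β ^ 2 - 11459 / 9 * β - 21791 / 9) * hβ

lemma sq_eval_discrRoot {β t : K} (hβ : aeval β fanoResolvent = 0) (ht : aeval t f13b = 0) :
    (discrRoot t).eval β ^ 2 = discrMultiplier β ^ 2 * (lineCubic β).discr := by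
  rw [discrMultiplier_sq_mul_discr_lineCubic hβ]
  rw [aeval_fanoResolvent] at hβ
  rw [aeval_f13b] at ht
  simp only [discrRoot, eval_add, eval_mul, eval_pow, eval_C, eval_X]
  linear_combination (
      (36 * β ^ 5 + 84 * β ^ 4 - 71 * β ^ 3 - 668 * β ^ 2 - 306 * β + 2931) +
      (168 * β ^ 5 + 436 * β ^ 4 - 456 * β ^ 3 - 4336 * β ^ 2 - 1568 * β + 21304) * t +
      (28 * β ^ 5 + 76 * β ^ 4 - 168 * β ^ 3 - 2156 * β ^ 2 - 920 * β + 14148) * t ^ 2 +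
      (-200 * β ^ 5 - 744 * β ^ 4 + 804 * β ^ 3 + 8800 * β ^ 2 + 3364 * β - 53740) * t ^ 3 +
      (452 * β ^ 5 + 1416 * β ^ 4 - 1856 * β ^ 3 - 16912 * β ^ 2 - 4488 * β + 100780) * t ^ 4 +
      (-728 * β ^ 5 - 2236 * β ^ 4 + 2828 * β ^ 3 + 25704 * β ^ 2 + 7508 * β - 150236) * t ^ 5 +
      (1000 * β ^ 5 + 3088 * β ^ 4 - 3760 * β ^ 3 - 34016 * β ^ 2 - 10092 * β + 196344) * t ^ 6
        +
      (-1104 * β ^ 5 - 3308 * β ^ 4 + 4068 * β ^ 3 + 35836 * β ^ 2 + 9772 * β - 204444) * t ^ 7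
        +
      (984 * β ^ 5 + 2888 * β ^ 4 - 3616 * β ^ 3 - 30928 * β ^ 2 - 8076 * β + 175368) * t ^ 8 +
      (-760 * β ^ 5 - 2200 * β ^ 4 + 2744 * β ^ 3 + 23336 * β ^ 2 + 6080 * β - 131448) * t ^ 9 +
      (516 * β ^ 5 + 1472 * β ^ 4 - 1820 * β ^ 3 - 15420 * β ^ 2 - 3888 * β + 86032) * t ^ 10 +
      (-288 * β ^ 5 - 792 * β ^ 4 + 1008 * β ^ 3 + 8208 * β ^ 2 + 1832 * β - 45336) * t ^ 11 +
      (120 * β ^ 5 + 304 * β ^ 4 - 412 * β ^ 3 - 3184 * β ^ 2 - 576 * β + 17324) * t ^ 12 +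
      (-32 * β ^ 5 - 72 * β ^ 4 + 104 * β ^ 3 + 784 * β ^ 2 + 112 * β - 4160) * t ^ 13 +
      (4 * β ^ 5 + 8 * β ^ 4 - 12 * β ^ 3 - 92 * β ^ 2 - 12 * β + 472) * t ^ 14) * hβ
    + (
      (8016 * β ^ 6 - 27288 * β ^ 5 - 67104 * β ^ 4 + 150216 * β ^ 3 + 140328 * β ^ 2 - 224928 *
        β - 49104) +
      (-8028 * β ^ 6 + 30516 * β ^ 5 + 71388 * β ^ 4 - 168264 * β ^ 3 - 153480 * β ^ 2 + 253260
        * β + 54972) * t +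
      (8716 * β ^ 6 - 33824 * β ^ 5 - 77364 * β ^ 4 + 186100 * β ^ 3 + 165496 * β ^ 2 - 277872 *
        β - 60120) * t ^ 2 +
      (-8736 * β ^ 6 + 31760 * β ^ 5 + 76284 * β ^ 4 - 175896 * β ^ 3 - 161884 * β ^ 2 + 264252
        * β + 57420) * t ^ 3 +
      (6308 * β ^ 6 - 24788 * β ^ 5 - 56844 * β ^ 4 + 136424 * β ^ 3 + 122680 * β ^ 2 - 204444 *
        β - 44316) * t ^ 4 +
      (-2792 * β ^ 6 + 11832 * β ^ 5 + 25296 * β ^ 4 - 64136 * β ^ 3 - 54672 * β ^ 2 + 94512 * β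
        + 20376) * t ^ 5 +
      (624 * β ^ 6 - 2496 * β ^ 5 - 5388 * β ^ 4 + 13440 * β ^ 3 + 11364 * β ^ 2 - 19572 * β -
        4212) * t ^ 6) * ht

end Resolvent

instance fact_prime_seven : Fact (Nat.Prime 7) := ⟨by norm_num⟩

lemma X_sub_C_pow_card {p : ℕ} [Fact p.Prime] (c : ZMod p) : (X - C c) ^ p = X ^ p - C c := by
  rw [sub_pow_char, ← C_pow, ZMod.pow_card]

lemma seven_eq_zero_of_zmod_seven : (7 : (ZMod 7)[X]) = 0 := CharP.cast_eq_zero (ZMod 7)[X] 7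

theorem irreducible_f13a : Irreducible f13a := by
  have hmap : f13a = (X ^ 7 - 7 * X + 3 : ℤ[X]).map (algebraMap ℤ ℚ) := by simp [f13a]
  rw [hmap]
  refine irreducible_map_rat_of_map_zmod_eq_pow (p := 7) (n := 7) (c := -3) (by monicity!)
    (by norm_num) ?_ (by norm_num)
  rw [X_sub_C_pow_card]
  simp only [Polynomial.map_add, Polynomial.map_sub, Polynomial.map_mul, Polynomial.map_pow, map_X,
    Polynomial.map_ofNat, Int.cast_neg, Int.cast_ofNat, map_neg, C_ofNat]
  linear_combination -X * seven_eq_zero_of_zmod_seven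

theorem irreducible_fanoResolvent : Irreducible fanoResolvent := by
  have hmap : fanoResolvent =
      (X ^ 7 + 7 * X ^ 4 - 21 * X ^ 3 - 21 * X ^ 2 + 42 * X + 9 : ℤ[X]).map (algebraMap ℤ ℚ) := by
    simp [fanoResolvent]
  rw [hmap]
  refine irreducible_map_rat_of_map_zmod_eq_pow (p := 7) (n := 7) (c := -2) (by monicity!)
    (by norm_num) ?_ (by norm_num)
  rw [X_sub_C_pow_card]
  simp only [Polynomial.map_add, Polynomial.map_sub, Polynomial.map_mul, Polynomial.map_pow, map_X,
    Polynomial.map_ofNat, Int.cast_neg, Int.cast_ofNat, map_neg, C_ofNat]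
  linear_combination (X ^ 4 - 3 * X ^ 3 - 3 * X ^ 2 + 6 * X + 1) * seven_eq_zero_of_zmod_seven

theorem irreducible_f13b : Irreducible f13b := by
  have hmap : f13b = (X ^ 8 - 4 * X ^ 7 + 7 * X ^ 6 - 7 * X ^ 5 + 7 * X ^ 4 - 7 * X ^ 3 + 7 * X ^ 2
      + 5 * X + 1 : ℤ[X]).map (algebraMap ℤ ℚ) := by
    simp [f13b]
  rw [hmap]
  refine irreducible_map_rat_of_map_zmod_eq_pow_mul_X_sub_C (p := 7) (n := 7) (c := 2) (d := 4)
    (by monicity!) (by norm_num) ?_ (by norm_num) fun x hx ↦ ?_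
  · rw [X_sub_C_pow_card]
    simp only [Polynomial.map_add, Polynomial.map_sub, Polynomial.map_mul, Polynomial.map_pow,
      map_X, Polynomial.map_ofNat, Polynomial.map_one, Int.cast_ofNat, C_ofNat]
    linear_combination (X ^ 6 - X ^ 5 + X ^ 4 - X ^ 3 + X ^ 2 + X - 1) * seven_eq_zero_of_zmod_seven
  · have hdvd : x ∣ 1 := by
      refine ⟨-(x ^ 7 - 4 * x ^ 6 + 7 * x ^ 5 - 7 * x ^ 4 + 7 * x ^ 3 - 7 * x ^ 2 + 7 * x + 5), ?_⟩
      simp only [IsRoot, eval_add, eval_sub, eval_pow, eval_X, eval_mul, eval_ofNat,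
        eval_one] at hx
      linear_combination hx
    rcases Int.isUnit_iff.1 (isUnit_of_dvd_one hdvd) with rfl | rfl <;> norm_num at hx

/-! ### Splitting of the octic -/

lemma mem_lifts_of_forall_eval_mem_range {K E : Type*} [Field K] [Field E] (i : K →+* E) {p : E[X]}
    {s : Finset K} (hdeg : p.degree < s.card) (hs : ∀ x ∈ s, p.eval (i x) ∈ i.range) :
    p ∈ lifts i := by
  classical
  choose! y hy using hs
  refine (mem_lifts p).2 ⟨Lagrange.interpolate s id y, ?_⟩
  refine eq_of_degrees_lt_of_eval_index_eq s i.injective.injOn ?_ hdeg fun x hx ↦ ?_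
  · exact degree_map_le.trans_lt (Lagrange.degree_interpolate_lt y Function.injective_id.injOn)
  · rw [eval_map_apply, ← hy x hx]
    exact congrArg i (Lagrange.eval_interpolate_at_node y Function.injective_id.injOn hx)

lemma splits_of_forall_root_mem_range {F K : Type*} (Ω : Type*) [Field F] [Field K] [Field Ω]
    [IsAlgClosed Ω] [Algebra F K] [Algebra F Ω] [Algebra K Ω] [IsScalarTower F K Ω] {p : F[X]}
    (h : ∀ x : Ω, aeval x p = 0 → x ∈ (algebraMap K Ω).range) :
    (p.map (algebraMap F K)).Splits := by
  refine Splits.of_splits_map (algebraMap K Ω) (IsAlgClosed.splits _) fun x hx ↦ h x ?_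
  rw [Polynomial.map_map, ← IsScalarTower.algebraMap_eq, ← aroots_def] at hx
  exact (mem_aroots.1 hx).2

lemma mem_range_of_aeval_eq_zero {F K E : Type*} [Field F] [Field K] [Field E] [Algebra F K]
    [Algebra F E] [Algebra K E] [IsScalarTower F K E] {p : F[X]} (hp : p ≠ 0)
    (hs : (p.map (algebraMap F K)).Splits) {x : E} (hx : aeval x p = 0) :
    x ∈ (algebraMap K E).range := by
  refine hs.mem_range_of_isRoot (Polynomial.map_ne_zero hp) ?_
  rwa [Polynomial.map_map, ← IsScalarTower.algebraMap_eq, IsRoot, eval_map_algebraMap]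

section RootDescent

lemma map_discrMultiplier {K E : Type*} [Field K] [Field E] (i : K →+* E) (β : K) :
    i (discrMultiplier β) = discrMultiplier (i β) := by
  simp [discrMultiplier, map_ofNat]

lemma mem_range_of_discrRoot_mem_lifts {K E : Type*} [Field K] [Field E] [CharZero E]
    [Algebra K E] {t : E} (h : discrRoot t ∈ lifts (algebraMap K E)) :
    t ∈ (algebraMap K E).range := by
  obtain ⟨q, hq⟩ := (mem_lifts _).1 h
  refine ⟨(-5 * q.coeff 0 - 4 * q.coeff 1 + q.coeff 2 - 16 * q.coeff 3 + 4 * q.coeff 4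
    - 64 * q.coeff 5 + 16 * q.coeff 6) / 252 + 1 / 2, ?_⟩
  rw [← combination_coeff_discrRoot t, ← hq]
  simp [map_ofNat]

lemma eq_of_roots_lineCubic_eq {K : Type*} [Field K] {β x y z : K}
    (h : (lineCubic β).roots = {x, y, z}) : β = -1 - x * y * z := by
  have := Cubic.d_eq_three_roots (φ := RingHom.id K) (P := lineCubic β) one_ne_zero h
  simp only [lineCubic, RingHom.id_apply, one_mul] at this
  linear_combination this

variable {K : Type*} [Field K] [Algebra ℚ K]

lemma exists_roots_lineCubic_eq (hf : (f13a.map (algebraMap ℚ K)).Splits) {β : K}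
    (hβ : aeval β fanoResolvent = 0) : ∃ x y z, (lineCubic β).roots = {x, y, z} := by
  have hsplits : (lineCubic β).toPoly.Splits :=
    hf.of_dvd (Polynomial.map_ne_zero irreducible_f13a.ne_zero) (lineCubic_toPoly_dvd hβ)
  rw [← Multiset.card_eq_three, Cubic.roots, ← hsplits.natDegree_eq_card_roots]
  exact Cubic.natDegree_of_a_ne_zero one_ne_zero

lemma aeval_f13a_of_mem_roots_lineCubic {β x : K} (hβ : aeval β fanoResolvent = 0)
    (hx : x ∈ (lineCubic β).roots) : aeval x f13a = 0 := by
  rw [← eval_map_algebraMap]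
  exact eval_eq_zero_of_dvd_of_eval_eq_zero (lineCubic_toPoly_dvd hβ) (isRoot_of_mem_roots hx)

lemma eval_discrRoot_eq_or_eq_neg {β t x y z : K} (hβ : aeval β fanoResolvent = 0)
    (ht : aeval t f13b = 0) (h : (lineCubic β).roots = {x, y, z}) :
    (discrRoot t).eval β = discrMultiplier β * ((x - y) * (x - z) * (y - z)) ∨
    (discrRoot t).eval β = -(discrMultiplier β * ((x - y) * (x - z) * (y - z))) := by
  have ha : (lineCubic β).a = 1 := rfl
  have hdiscr :=
    Cubic.discr_eq_prod_three_roots (φ := RingHom.id K) (P := lineCubic β) one_ne_zero h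
  simp only [RingHom.id_apply, ha, one_mul] at hdiscr
  rw [← sq_eq_sq_iff_eq_or_eq_neg, sq_eval_discrRoot hβ ht, hdiscr, ← mul_pow]

lemma natDegree_fanoResolvent : fanoResolvent.natDegree = 7 := by
  unfold fanoResolvent; compute_degree!

lemma card_rootSet_fanoResolvent (hf : (fanoResolvent.map (algebraMap ℚ K)).Splits) :
    Fintype.card (fanoResolvent.rootSet K) = 7 :=
  (card_rootSet_eq_natDegree irreducible_fanoResolvent.separable hf).trans natDegree_fanoResolvent

section Descent

variable {E : Type*} [Field E] [Algebra K E] [Algebra ℚ E] [IsScalarTower ℚ K E]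

lemma exists_roots_lineCubic_eq_algebraMap (hf : (f13a.map (algebraMap ℚ K)).Splits) {β : E}
    (hβ : aeval β fanoResolvent = 0) :
    ∃ x y z : K, (lineCubic β).roots = {algebraMap K E x, algebraMap K E y, algebraMap K E z} := by
  have hfE : (f13a.map (algebraMap ℚ E)).Splits := by
    simpa only [Polynomial.map_map, ← IsScalarTower.algebraMap_eq] using hf.map (algebraMap K E)
  have hmem {u : E} (hu : u ∈ (lineCubic β).roots) : u ∈ (algebraMap K E).range :=
    mem_range_of_aeval_eq_zero irreducible_f13a.ne_zero hf (aeval_f13a_of_mem_roots_lineCubic hβ hu)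
  obtain ⟨x, y, z, h⟩ := exists_roots_lineCubic_eq hfE hβ
  obtain ⟨x, rfl⟩ := hmem (u := x) (by simp [h])
  obtain ⟨y, rfl⟩ := hmem (u := y) (by simp [h])
  obtain ⟨z, rfl⟩ := hmem (u := z) (by simp [h])
  exact ⟨x, y, z, h⟩

lemma eval_discrRoot_mem_range (hf : (f13a.map (algebraMap ℚ K)).Splits) {β : K} {t : E}
    (hβ : aeval β fanoResolvent = 0) (ht : aeval t f13b = 0) :
    (discrRoot t).eval (algebraMap K E β) ∈ (algebraMap K E).range := by
  have hβE : aeval (algebraMap K E β) fanoResolvent = 0 := by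
    rw [aeval_algebraMap_apply, hβ, map_zero]
  obtain ⟨x, y, z, h⟩ := exists_roots_lineCubic_eq_algebraMap hf hβE
  rcases eval_discrRoot_eq_or_eq_neg hβE ht h with hv | hv
  · exact ⟨discrMultiplier β * ((x - y) * (x - z) * (y - z)), by simp [hv, map_discrMultiplier]⟩
  · exact ⟨-(discrMultiplier β * ((x - y) * (x - z) * (y - z))), by simp [hv, map_discrMultiplier]⟩

end Descent

lemma splits_fanoResolvent (hf : (f13a.map (algebraMap ℚ K)).Splits) :
    (fanoResolvent.map (algebraMap ℚ K)).Splits := by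
  refine splits_of_forall_root_mem_range (AlgebraicClosure K) fun β hβ ↦ ?_
  obtain ⟨x, y, z, h⟩ := exists_roots_lineCubic_eq_algebraMap hf hβ
  exact ⟨-1 - x * y * z, by simp [eq_of_roots_lineCubic_eq h]⟩

lemma splits_f13b (hf : (f13a.map (algebraMap ℚ K)).Splits) :
    (f13b.map (algebraMap ℚ K)).Splits := by
  have := algebraRat.charZero (AlgebraicClosure K)
  refine splits_of_forall_root_mem_range (AlgebraicClosure K) fun t ht ↦ ?_
  refine mem_range_of_discrRoot_mem_lifts (mem_lifts_of_forall_eval_mem_range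
    (s := (fanoResolvent.rootSet K).toFinset) _ ?_ fun β hβ ↦ ?_)
  · rw [Set.toFinset_card, card_rootSet_fanoResolvent (splits_fanoResolvent hf)]
    exact degree_discrRoot_lt t
  · exact eval_discrRoot_mem_range hf (aeval_eq_zero_of_mem_rootSet (Set.mem_toFinset.1 hβ)) ht

end RootDescent

/-! ### Group theory -/

open scoped Pointwise

section GroupTheory

open scoped Nat

lemma eq_top_of_factorial_index_lt_card {G : Type*} [Group G] [IsSimpleGroup G] [Finite G]
    {H : Subgroup G} (h : H.index ! < Nat.card G) : H = ⊤ := by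
  rcases (inferInstance : H.normalCore.Normal).eq_bot_or_eq_top with hcore | hcore
  · rw [H.normalCore_eq_ker, MonoidHom.ker_eq_bot_iff] at hcore
    have := Nat.card_le_card_of_injective _ hcore
    rw [Nat.card_perm] at this
    exact absurd h this.not_gt
  · exact top_le_iff.1 (hcore ▸ H.normalCore_le)

lemma card_subgroup_perm_le_descFactorial {α : Type*} [Fintype α] {k : ℕ}
    {H : Subgroup (Equiv.Perm α)} (b : Fin k ↪ α)
    (hb : ∀ σ ∈ H, ∀ τ ∈ H, (∀ i, σ (b i) = τ (b i)) → σ = τ) :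
    Nat.card H ≤ (Fintype.card α).descFactorial k := by
  classical
  have hinj : Function.Injective fun σ : H ↦ b.trans (σ : Equiv.Perm α).toEmbedding :=
    fun σ τ h ↦ Subtype.ext (hb _ σ.2 _ τ.2 fun i ↦ DFunLike.congr_fun h i)
  simpa [Fintype.card_embedding_eq] using Nat.card_le_card_of_injective _ hinj

section PrimeDegree

variable {G Ω : Type*} [Group G] [Fintype Ω] [MulAction G Ω] [FaithfulSMul G Ω] {p : ℕ}
  [Fact p.Prime]

lemma exists_pow_smul_eq_of_orderOf_eq_card (hΩ : Fintype.card Ω = p) {g : G}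
    (hg : orderOf g = p) (x y : Ω) : ∃ n : ℕ, g ^ n • x = y := by
  classical
  have hp := Fact.out (p := p.Prime)
  let σ := MulAction.toPermHom G Ω g
  have hσ : orderOf σ = p := (orderOf_injective _ MulAction.toPerm_injective g).trans hg
  have hcycle : σ.IsCycle :=
    Equiv.Perm.isCycle_of_prime_order' (hσ.symm ▸ hp) (by have := hp.pos; lia)
  have hsupport : σ.support = Finset.univ := by
    rw [← Finset.card_eq_iff_eq_univ, ← hcycle.orderOf, hσ, hΩ]
  have hmoves (z : Ω) : σ z ≠ z := by
    rw [← Equiv.Perm.mem_support, hsupport]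
    exact Finset.mem_univ z
  obtain ⟨n, hn⟩ := hcycle.exists_pow_eq (hmoves x) (hmoves y)
  exact ⟨n, by rwa [← map_pow] at hn⟩

lemma exists_zmod_equiv_forall_add_eq_smul [Finite G] (hΩ : Fintype.card Ω = p)
    (hG : p ∣ Nat.card G) : ∃ e : ZMod p ≃ Ω, ∀ j, ∃ g : G, ∀ i, e (j + i) = g • e i := by
  obtain ⟨g, hg⟩ := exists_prime_orderOf_dvd_card' p hG
  have hmod (n : ℕ) : g ^ (n % p) = g ^ n := by rw [← hg, pow_mod_orderOf]
  obtain ⟨x⟩ : Nonempty Ω := Fintype.card_pos_iff.1 (hΩ ▸ Fact.out (p := p.Prime).pos)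
  have hsurj : Function.Surjective fun i : ZMod p ↦ g ^ i.val • x := fun y ↦ by
    obtain ⟨n, rfl⟩ := exists_pow_smul_eq_of_orderOf_eq_card hΩ hg x y
    exact ⟨n, by simp only [ZMod.val_natCast, hmod]⟩
  have hbij := (Fintype.bijective_iff_surjective_and_card _).2 ⟨hsurj, by rw [ZMod.card, hΩ]⟩
  refine ⟨Equiv.ofBijective _ hbij, fun j ↦ ⟨g ^ j.val, fun i ↦ ?_⟩⟩
  simp only [Equiv.ofBijective_apply, ZMod.val_add, hmod, pow_add, mul_smul]

end PrimeDegree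

section SL2

open Matrix.SpecialLinearGroup (transvection)

/-- The Weyl element of `SL₂`, which generates the group together with the upper unipotent
matrices. -/
def weylElement (F : Type*) [Field F] : SL(2, F) := ⟨!![0, -1; 1, 0], by simp⟩

variable {F : Type*} [Field F]

lemma coe_weylElement : (weylElement F : Matrix (Fin 2) (Fin 2) F) = !![0, -1; 1, 0] := rfl

lemma coe_transvection_zero_one (s : F) :
    (transvection (zero_ne_one' (Fin 2)) s : Matrix (Fin 2) (Fin 2) F) = !![1, s; 0, 1] := by
  rw [Matrix.SpecialLinearGroup.transvection_coe]
  ext i j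
  fin_cases i <;> fin_cases j <;> simp

lemma transvection_one_zero_eq (s : F) :
    transvection (one_ne_zero' (Fin 2)) s = weylElement F * transvection zero_ne_one (-s) *
      weylElement F * (weylElement F * weylElement F) := by
  apply Subtype.ext
  rw [Matrix.SpecialLinearGroup.transvection_coe]
  simp only [Matrix.SpecialLinearGroup.coe_mul, coe_weylElement, coe_transvection_zero_one]
  ext i j
  fin_cases i <;> fin_cases j <;> simp

lemma SL2_induction {P : SL(2, F) → Prop} (hweyl : P (weylElement F))
    (hupper : ∀ s, P (transvection zero_ne_one s)) (hmul : ∀ g h, P g → P h → P (g * h))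
    (g : SL(2, F)) : P g := by
  refine Matrix.SL2.transvection_induction P (fun i j hij s ↦ ?_) hmul g
  fin_cases i <;> fin_cases j
  · exact absurd rfl hij
  · exact hupper s
  · refine (transvection_one_zero_eq s).symm ▸ ?_
    exact hmul _ _ (hmul _ _ (hmul _ _ hweyl (hupper (-s))) hweyl) (hmul _ _ hweyl hweyl)
  · exact absurd rfl hij

end SL2

end GroupTheory

/-! ### The Fano plane -/

section Collineations

open Matrix.SpecialLinearGroup (transvection)

/-- The translates of a subset of a finite group. -/
def translates {A : Type*} [AddGroup A] [Fintype A] [DecidableEq A] (S : Finset A) :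
    Finset (Finset A) :=
  Finset.univ.image fun j : A ↦ j +ᵥ S

/-- The lines of the Fano plane with point set `ZMod 7`: the translates of the perfect difference
set `{0, 1, 3}`. -/
def fanoLines : Finset (Finset (ZMod 7)) := translates {0, 1, 3}

/-- The group of collineations of the Fano plane. -/
def collineationGroup : Subgroup (Equiv.Perm (ZMod 7)) := MulAction.stabilizer _ fanoLines

/-- The third point of the Fano line through two distinct points `x` and `y`. Up to translation the
line is `{0, d, 4d - d⁴}`, because `4d - d⁴` is `3d` if `d` is a square and `5d` otherwise. -/
def thirdPoint (x y : ZMod 7) : ZMod 7 := x + 4 * (y - x) - (y - x) ^ 4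

lemma eq_thirdPoint_of_mem_fanoLines : ∀ {x y z : ZMod 7}, x ≠ y → x ≠ z → y ≠ z →
    {x, y, z} ∈ fanoLines → z = thirdPoint x y := by
  decide +kernel

lemma insert_thirdPoint_mem_fanoLines : ∀ {x y : ZMod 7}, x ≠ y →
    {x, y, thirdPoint x y} ∈ fanoLines := by
  decide +kernel

lemma ne_thirdPoint : ∀ {x y : ZMod 7}, x ≠ y → x ≠ thirdPoint x y ∧ y ≠ thirdPoint x y := by
  decide +kernel

section

variable {σ τ : Equiv.Perm (ZMod 7)}

lemma mem_collineationGroup :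
    σ ∈ collineationGroup ↔ ∀ T ∈ fanoLines, T.image σ ∈ fanoLines :=
  MulAction.mem_stabilizer_finset'

lemma apply_thirdPoint (hσ : σ ∈ collineationGroup) {x y : ZMod 7} (hxy : x ≠ y) :
    σ (thirdPoint x y) = thirdPoint (σ x) (σ y) := by
  have hline := mem_collineationGroup.1 hσ _ (insert_thirdPoint_mem_fanoLines hxy)
  simp only [Finset.image_insert, Finset.image_singleton] at hline
  exact eq_thirdPoint_of_mem_fanoLines (σ.injective.ne hxy)
    (σ.injective.ne (ne_thirdPoint hxy).1) (σ.injective.ne (ne_thirdPoint hxy).2) hline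

lemma eq_of_mem_collineationGroup (hσ : σ ∈ collineationGroup) (hτ : τ ∈ collineationGroup)
    (h0 : σ 0 = τ 0) (h1 : σ 1 = τ 1) (h2 : σ 2 = τ 2) : σ = τ := by
  have step {x y : ZMod 7} (hxy : x ≠ y) (hx : σ x = τ x) (hy : σ y = τ y) :
      σ (thirdPoint x y) = τ (thirdPoint x y) := by
    rw [apply_thirdPoint hσ hxy, apply_thirdPoint hτ hxy, hx, hy]
  have h3 : σ 3 = τ 3 := step (x := 0) (y := 1) (by decide) h0 h1
  have h4 : σ 4 = τ 4 := step (x := 1) (y := 2) (by decide) h1 h2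
  have h5 : σ 5 = τ 5 := step (x := 2) (y := 3) (by decide) h2 h3
  have h6 : σ 6 = τ 6 := step (x := 3) (y := 4) (by decide) h3 h4
  ext1 x
  fin_cases x
  exacts [h0, h1, h2, h3, h4, h5, h6]

lemma card_collineationGroup_le : Nat.card collineationGroup ≤ 210 :=
  card_subgroup_perm_le_descFactorial ⟨![0, 1, 2], by decide⟩ fun _ hσ _ hτ h ↦
    eq_of_mem_collineationGroup hσ hτ (h 0) (h 1) (h 2)

end

/-- Hermite's permutation polynomial: the involution of `ZMod 7` by which the Weyl element of
`SL(2, ZMod 7)` acts on the seven points of the Fano plane. -/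
def hermiteInvolution (x : ZMod 7) : ZMod 7 := 3 * x ^ 5 - x ^ 2

lemma hermiteInvolution_hermiteInvolution : ∀ x, hermiteInvolution (hermiteInvolution x) = x := by
  decide +kernel

lemma hermiteInvolution_sq_mul : ∀ {k : ZMod 7}, k ≠ 0 → ∀ x,
    hermiteInvolution (k ^ 2 * x) = k⁻¹ ^ 2 * hermiteInvolution x := by
  decide +kernel

lemma hermiteInvolution_sub : ∀ {r : ZMod 7}, r ≠ 0 → ∀ u,
    hermiteInvolution (u - r) = r⁻¹ + hermiteInvolution (r ^ 2 * hermiteInvolution u + r) := by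
  decide +kernel

lemma image_hermiteInvolution_mem_fanoLines :
    ∀ T ∈ fanoLines, T.image hermiteInvolution ∈ fanoLines := by decide +kernel

/-- The action of `SL(2, ZMod 7)` on the seven points of the Fano plane, read off from the Bruhat
decomposition: unipotent matrices act by translations, diagonal matrices by multiplication with
the square of their first entry, and the Weyl element acts by `hermiteInvolution`. -/
def fanoAct (g : SL(2, ZMod 7)) (x : ZMod 7) : ZMod 7 :=
  if g 1 0 = 0 then g 0 0 ^ 2 * x + g 0 0 * g 0 1
  else g 0 0 / g 1 0 + hermiteInvolution (g 1 0 ^ 2 * x + g 1 0 * g 1 1)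

lemma fanoAct_weylElement : fanoAct (weylElement (ZMod 7)) = hermiteInvolution := by
  ext1 x
  simp [fanoAct, coe_weylElement]

lemma fanoAct_transvection (s : ZMod 7) : fanoAct (transvection zero_ne_one s) = (s + ·) := by
  ext1 x
  simp [fanoAct, coe_transvection_zero_one, add_comm]

lemma fanoAct_mul_transvection (g : SL(2, ZMod 7)) (s x : ZMod 7) :
    fanoAct (g * transvection zero_ne_one s) x = fanoAct g (s + x) := by
  simp only [fanoAct, Matrix.SpecialLinearGroup.coe_mul, coe_transvection_zero_one,
    Matrix.mul_apply, Fin.sum_univ_two, Matrix.of_apply, Matrix.cons_val, mul_zero, mul_one,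
    add_zero]
  split_ifs <;> ring_nf

lemma fanoAct_mul_weylElement (g : SL(2, ZMod 7)) (x : ZMod 7) :
    fanoAct (g * weylElement (ZMod 7)) x = fanoAct g (hermiteInvolution x) := by
  have hdet : g 0 0 * g 1 1 - g 0 1 * g 1 0 = 1 := by rw [← Matrix.det_fin_two, g.det_coe]
  simp only [fanoAct, Matrix.SpecialLinearGroup.coe_mul, coe_weylElement, Matrix.mul_apply,
    Fin.sum_univ_two, Matrix.of_apply, Matrix.cons_val, mul_zero, mul_one, zero_add, add_zero,
    mul_neg]
  generalize g 0 0 = a, g 0 1 = b, g 1 0 = c, g 1 1 = d at hdet ⊢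
  split_ifs with hd hc hc
  · simp [hc, hd] at hdet
  · have hb : b = -c⁻¹ := by grind
    rw [hd, mul_zero, add_zero, hermiteInvolution_sq_mul hc, hermiteInvolution_hermiteInvolution,
      hb]
    ring
  · have ha : a = d⁻¹ := by grind
    rw [hc, mul_zero, neg_zero, add_zero, hermiteInvolution_sq_mul hd, ha]
    ring
  · have hquot : b / d + (d * c)⁻¹ = a / c := by grind
    have hsq : (d * c) ^ 2 * (d⁻¹ ^ 2 * hermiteInvolution x) = c ^ 2 * hermiteInvolution x := by
      grind
    rw [← sub_eq_add_neg, hermiteInvolution_sub (mul_ne_zero hd hc), hermiteInvolution_sq_mul hd,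
      ← add_assoc, hquot, hsq, mul_comm d c]

lemma fanoAct_one (x : ZMod 7) : fanoAct 1 x = x := by simp [fanoAct]

lemma fanoAct_mul (g h : SL(2, ZMod 7)) (x : ZMod 7) :
    fanoAct (g * h) x = fanoAct g (fanoAct h x) := by
  induction h using SL2_induction generalizing g x with
  | hweyl => rw [fanoAct_mul_weylElement, fanoAct_weylElement]
  | hupper s => rw [fanoAct_mul_transvection, fanoAct_transvection]
  | hmul h₁ h₂ ih₁ ih₂ => rw [← mul_assoc, ih₂, ih₁, ih₂ h₁]

/-- The permutation representation of `SL(2, ZMod 7)` on the points of the Fano plane. -/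
def fanoPerm : SL(2, ZMod 7) →* Equiv.Perm (ZMod 7) :=
  MonoidHom.toHomPerm
    { toFun := fanoAct
      map_one' := funext fanoAct_one
      map_mul' := fun g h ↦ funext (fanoAct_mul g h) }

lemma coe_fanoPerm (g : SL(2, ZMod 7)) : ⇑(fanoPerm g) = fanoAct g := rfl

lemma image_add_mem_fanoLines :
    ∀ s : ZMod 7, ∀ T ∈ fanoLines, T.image (s + ·) ∈ fanoLines := by
  decide +kernel

lemma fanoPerm_mem_collineationGroup (g : SL(2, ZMod 7)) : fanoPerm g ∈ collineationGroup := by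
  induction g using SL2_induction with
  | hweyl =>
    rw [mem_collineationGroup, coe_fanoPerm, fanoAct_weylElement]
    exact image_hermiteInvolution_mem_fanoLines
  | hupper s =>
    rw [mem_collineationGroup, coe_fanoPerm, fanoAct_transvection]
    exact image_add_mem_fanoLines s
  | hmul g h hg hh => exact map_mul fanoPerm g h ▸ mul_mem hg hh

lemma fanoPerm_eq_one_of_mem_center {g : SL(2, ZMod 7)} (hg : g ∈ Subgroup.center SL(2, ZMod 7)) :
    fanoPerm g = 1 := by
  obtain ⟨r, hr, h⟩ := Matrix.SpecialLinearGroup.mem_center_iff.1 hg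
  ext1 x
  rw [Fintype.card_fin] at hr
  simp [coe_fanoPerm, fanoAct, ← h, hr]

lemma exists_fanoAct_eq_affine {k : ZMod 7} (hk : k ≠ 0) (r : ZMod 7) :
    ∃ g, ∀ x, fanoAct g x = k ^ 2 * x + r := by
  refine ⟨⟨!![k, r / k; 0, k⁻¹], by simp [hk]⟩, fun x ↦ ?_⟩
  simp [fanoAct, mul_div_cancel₀, hk]

lemma exists_fanoAct_eq_add_hermiteInvolution {k : ZMod 7} (hk : k ≠ 0) (r s : ZMod 7) :
    ∃ g, ∀ x, fanoAct g x = r + hermiteInvolution (k ^ 2 * x + s) := by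
  refine ⟨⟨!![r * k, (r * s - 1) / k; k, s / k], by rw [Matrix.det_fin_two_of]; grind⟩, fun x ↦ ?_⟩
  simp [fanoAct, hk, mul_div_cancel₀]

lemma exists_affine_or_add_hermiteInvolution : ∀ {x y z : ZMod 7}, x ≠ y → x ≠ z → y ≠ z →
    z ≠ thirdPoint x y →
    (∃ k, k ≠ 0 ∧ ∃ r, k ^ 2 * 0 + r = x ∧ k ^ 2 * 1 + r = y ∧ k ^ 2 * 2 + r = z) ∨
    (∃ k, k ≠ 0 ∧ ∃ r s, r + hermiteInvolution (k ^ 2 * 0 + s) = x ∧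
      r + hermiteInvolution (k ^ 2 * 1 + s) = y ∧ r + hermiteInvolution (k ^ 2 * 2 + s) = z) := by
  decide +kernel

lemma exists_fanoAct_eq {x y z : ZMod 7} (hxy : x ≠ y) (hxz : x ≠ z) (hyz : y ≠ z)
    (hz : z ≠ thirdPoint x y) : ∃ g, fanoAct g 0 = x ∧ fanoAct g 1 = y ∧ fanoAct g 2 = z := by
  obtain ⟨k, hk, r, h⟩ | ⟨k, hk, r, s, h⟩ :=
    exists_affine_or_add_hermiteInvolution hxy hxz hyz hz
  · obtain ⟨g, hg⟩ := exists_fanoAct_eq_affine hk r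
    exact ⟨g, by simpa only [hg] using h⟩
  · obtain ⟨g, hg⟩ := exists_fanoAct_eq_add_hermiteInvolution hk r s
    exact ⟨g, by simpa only [hg] using h⟩

lemma exists_fanoPerm_eq {σ : Equiv.Perm (ZMod 7)} (hσ : σ ∈ collineationGroup) :
    ∃ g, fanoPerm g = σ := by
  have hne {x y : ZMod 7} (h : x ≠ y) : σ x ≠ σ y := σ.injective.ne h
  have hthird : σ 2 ≠ thirdPoint (σ 0) (σ 1) := by
    rw [← apply_thirdPoint hσ (by decide)]
    exact hne (by decide)
  obtain ⟨g, h0, h1, h2⟩ := exists_fanoAct_eq (hne (by decide)) (hne (by decide))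
    (hne (by decide)) hthird
  exact ⟨g, eq_of_mem_collineationGroup (fanoPerm_mem_collineationGroup g) hσ h0 h1 h2⟩

instance isSimpleGroup_psl_two_seven : IsSimpleGroup PSL(2, ZMod 7) :=
  Matrix.ProjectiveSpecialLinearGroup.rank_two_simple (by simp)

theorem nonempty_psl_mulEquiv_collineationGroup :
    Nonempty (PSL(2, ZMod 7) ≃* collineationGroup) := by
  let φ : PSL(2, ZMod 7) →* collineationGroup :=
    QuotientGroup.lift _ (fanoPerm.codRestrict _ fanoPerm_mem_collineationGroup)
      fun g hg ↦ Subtype.ext (fanoPerm_eq_one_of_mem_center hg)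
  have hsurj : Function.Surjective φ := fun σ ↦ by
    obtain ⟨g, hg⟩ := exists_fanoPerm_eq σ.2
    exact ⟨g, Subtype.ext hg⟩
  have hinj : Function.Injective φ := by
    rw [← MonoidHom.ker_eq_bot_iff]
    refine (inferInstance : φ.ker.Normal).eq_bot_or_eq_top.resolve_right fun htop ↦ ?_
    have htrans : fanoPerm (transvection zero_ne_one 1) = 1 :=
      congrArg Subtype.val (DFunLike.congr_fun (MonoidHom.ker_eq_top_iff.1 htop)
        (QuotientGroup.mk (transvection zero_ne_one 1)))
    simpa [coe_fanoPerm, fanoAct_transvection] using DFunLike.congr_fun htrans 0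
  exact ⟨.ofBijective φ ⟨hinj, hsurj⟩⟩

end Collineations

/-- The triples of consecutive elements of `ZMod 7`. Up to dilation these and the Fano lines are the
only systems of seven triples that are invariant under translation. -/
def cyclicIntervals : Finset (Finset (ZMod 7)) := translates {0, 1, 2}

/-- The permutations of `ZMod 7` that preserve the triples of consecutive elements. -/
def cyclicIntervalGroup : Subgroup (Equiv.Perm (ZMod 7)) := MulAction.stabilizer _ cyclicIntervals

lemma mem_cyclicIntervalGroup {σ : Equiv.Perm (ZMod 7)} :
    σ ∈ cyclicIntervalGroup ↔ ∀ T ∈ cyclicIntervals, T.image σ ∈ cyclicIntervals :=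
  MulAction.mem_stabilizer_finset'

lemma eq_add_one_or_eq_add_one_of_mem_cyclicIntervals : ∀ {a b c d : ZMod 7}, a ≠ d → b ≠ c →
    {a, b, c} ∈ cyclicIntervals → {b, c, d} ∈ cyclicIntervals → c = b + 1 ∨ b = c + 1 := by
  decide +kernel

section Interval

variable {σ τ : Equiv.Perm (ZMod 7)}

lemma insert_mem_cyclicIntervals : ∀ i : ZMod 7, {i, i + 1, i + 2} ∈ cyclicIntervals := by
  decide +kernel

lemma insert_apply_mem_cyclicIntervals (hσ : σ ∈ cyclicIntervalGroup) (i : ZMod 7) :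
    {σ i, σ (i + 1), σ (i + 2)} ∈ cyclicIntervals := by
  simpa only [Finset.image_insert, Finset.image_singleton] using
    mem_cyclicIntervalGroup.1 hσ _ (insert_mem_cyclicIntervals i)

lemma apply_add_one_eq_or (hσ : σ ∈ cyclicIntervalGroup) (i : ZMod 7) :
    σ (i + 1) = σ i + 1 ∨ σ i = σ (i + 1) + 1 := by
  have hprev := insert_apply_mem_cyclicIntervals hσ (i - 1)
  have hsucc : i - 1 + 2 = i + 1 := by ring
  rw [sub_add_cancel, hsucc] at hprev
  refine eq_add_one_or_eq_add_one_of_mem_cyclicIntervals (σ.injective.ne ?_) (σ.injective.ne ?_)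
    hprev (insert_apply_mem_cyclicIntervals hσ i)
  · exact (by decide : ∀ i : ZMod 7, i - 1 ≠ i + 2) i
  · exact (by decide : ∀ i : ZMod 7, i ≠ i + 1) i

lemma apply_add_two (hσ : σ ∈ cyclicIntervalGroup) (i : ZMod 7) :
    σ (i + 2) = 2 * σ (i + 1) - σ i := by
  have hne : σ i ≠ σ (i + 2) := σ.injective.ne ((by decide : ∀ i : ZMod 7, i ≠ i + 2) i)
  have hnext := apply_add_one_eq_or hσ (i + 1)
  rw [add_assoc, one_add_one_eq_two] at hnext
  grind [apply_add_one_eq_or hσ i]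

lemma eq_of_mem_cyclicIntervalGroup (hσ : σ ∈ cyclicIntervalGroup) (hτ : τ ∈ cyclicIntervalGroup)
    (h0 : σ 0 = τ 0) (h1 : σ 1 = τ 1) : σ = τ := by
  have step (n : ℕ) : σ n = τ n ∧ σ (n + 1) = τ (n + 1) := by
    induction n with
    | zero => simpa using ⟨h0, h1⟩
    | succ n ih =>
      push_cast
      rw [add_assoc, one_add_one_eq_two, apply_add_two hσ, apply_add_two hτ, ih.1, ih.2]
      exact ⟨rfl, rfl⟩
  ext1 i
  simpa using (step i.val).1

end Interval

lemma card_cyclicIntervalGroup_le : Nat.card cyclicIntervalGroup ≤ 42 :=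
  card_subgroup_perm_le_descFactorial ⟨![0, 1], by decide⟩ fun _ hσ _ hτ h ↦
    eq_of_mem_cyclicIntervalGroup hσ hτ (h 0) (h 1)

lemma exists_mul_image_mem_fanoLines_or_mem_cyclicIntervals :
    ∀ T : Finset (ZMod 7), T.card = 3 → ∃ k : ZMod 7, k ≠ 0 ∧
      (T.image (k * ·) ∈ fanoLines ∨ T.image (k * ·) ∈ cyclicIntervals) := by
  decide +kernel

lemma eq_collineationGroup_of_le {H : Subgroup (Equiv.Perm (ZMod 7))} (hle : H ≤ collineationGroup)
    (hcard : 56 ≤ Nat.card H) : H = collineationGroup := by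
  obtain ⟨ψ⟩ := nonempty_psl_mulEquiv_collineationGroup
  have : Nontrivial collineationGroup := ψ.symm.toEquiv.nontrivial
  have : IsSimpleGroup collineationGroup :=
    IsSimpleGroup.isSimpleGroup_of_surjective ψ.toMonoidHom ψ.surjective
  have hindex : (H.subgroupOf collineationGroup).index ≤ 3 := by
    have hmul := (H.subgroupOf collineationGroup).card_mul_index
    rw [Nat.card_congr (Subgroup.subgroupOfEquivOfLe hle).toEquiv] at hmul
    nlinarith [card_collineationGroup_le]
  refine hle.antisymm (Subgroup.subgroupOf_eq_top.1 (eq_top_of_factorial_index_lt_card ?_))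
  calc Nat.factorial (H.subgroupOf collineationGroup).index ≤ Nat.factorial 3 :=
        Nat.factorial_le hindex
    _ < 56 := by decide
    _ ≤ Nat.card collineationGroup := hcard.trans (Subgroup.card_le_of_le hle)

section Labelling

variable {G Ω A : Type*} [Group G] [DecidableEq Ω] [MulAction G Ω] {𝓛 : Finset (Finset Ω)}
  [DecidableEq A] {e : A ≃ Ω}

lemma permCongrHom_toPermHom_mem_stabilizer (h𝓛 : ∀ g : G, ∀ T ∈ 𝓛, g • T ∈ 𝓛)
    {𝓢 : Finset (Finset A)} (he : ∀ T : Finset A, T.image e ∈ 𝓛 ↔ T ∈ 𝓢) (g : G) :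
    e.symm.permCongrHom (MulAction.toPermHom G Ω g) ∈ MulAction.stabilizer _ 𝓢 := by
  refine MulAction.mem_stabilizer_finset'.2 fun T hT ↦ (he _).1 ?_
  convert h𝓛 g _ ((he T).2 hT) using 1
  ext x
  simp [Finset.mem_smul_finset]

variable [AddGroup A]

lemma image_vadd_eq_smul_image {g : G} {j : A} (hg : ∀ i, e (j + i) = g • e i) (S : Finset A) :
    (j +ᵥ S).image e = g • S.image e := by
  ext x
  simp [Finset.mem_smul_finset, Finset.mem_vadd_finset, hg]

lemma image_mem_iff_mem_translates [Fintype A] (he : ∀ j, ∃ g : G, ∀ i, e (j + i) = g • e i)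
    (h𝓛 : ∀ g : G, ∀ T ∈ 𝓛, g • T ∈ 𝓛) {S U : Finset A} (hcard : 𝓛.card ≤ (translates S).card)
    (hU : U ∈ translates S) (hU𝓛 : U.image e ∈ 𝓛) (T : Finset A) :
    T.image e ∈ 𝓛 ↔ T ∈ translates S := by
  have image_vadd_mem (j : A) {T : Finset A} (hT : T.image e ∈ 𝓛) : (j +ᵥ T).image e ∈ 𝓛 := by
    obtain ⟨g, hg⟩ := he j
    exact image_vadd_eq_smul_image hg T ▸ h𝓛 g _ hT
  simp only [translates, Finset.mem_image, Finset.mem_univ, true_and] at hU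
  obtain ⟨i, rfl⟩ := hU
  have hsubset : (translates S).image (Finset.image e) ⊆ 𝓛 := by
    simp only [translates, Finset.image_subset_iff, Finset.mem_univ, true_imp_iff,
      Finset.image_image, Function.comp_apply]
    intro j
    simpa only [vadd_vadd, neg_add_cancel_right] using image_vadd_mem (j + -i) hU𝓛
  have hinj := Finset.image_injective e.injective
  have heq := Finset.eq_of_subset_of_card_le hsubset
    (by rwa [Finset.card_image_of_injective _ hinj])
  rw [← heq, hinj.mem_finset_image]

end Labelling

section SevenPoints

variable {G Ω : Type*} [Group G] [Finite G] [Fintype Ω] [DecidableEq Ω] [MulAction G Ω]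
  [FaithfulSMul G Ω] {𝓛 : Finset (Finset Ω)}

lemma exists_equiv_forall_image_mem_iff (hΩ : Fintype.card Ω = 7) (hG : 7 ∣ Nat.card G)
    (h𝓛 : 𝓛.card = 7) (hcard : ∀ T ∈ 𝓛, T.card = 3) (hsmul : ∀ g : G, ∀ T ∈ 𝓛, g • T ∈ 𝓛) :
    ∃ e : ZMod 7 ≃ Ω, (∀ T, T.image e ∈ 𝓛 ↔ T ∈ fanoLines) ∨
      ∀ T, T.image e ∈ 𝓛 ↔ T ∈ cyclicIntervals := by
  obtain ⟨e, he⟩ := exists_zmod_equiv_forall_add_eq_smul hΩ hG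
  obtain ⟨T, hT⟩ : 𝓛.Nonempty := Finset.card_pos.1 (h𝓛 ▸ by norm_num)
  obtain ⟨k, hk, hTk⟩ := exists_mul_image_mem_fanoLines_or_mem_cyclicIntervals (T.image e.symm)
    (by rw [Finset.card_image_of_injective _ e.symm.injective, hcard T hT])
  let dilated : ZMod 7 ≃ Ω := (Equiv.mulLeft₀ k hk).symm.trans e
  have hdilated (j : ZMod 7) : ∃ g : G, ∀ i, dilated (j + i) = g • dilated i := by
    obtain ⟨g, hg⟩ := he (k⁻¹ * j)
    exact ⟨g, fun i ↦ by simpa [dilated, mul_add] using hg (k⁻¹ * i)⟩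
  have himage : ((T.image e.symm).image (k * ·)).image dilated ∈ 𝓛 := by
    simpa [Finset.image_image, dilated, Function.comp_def, hk] using hT
  have hfano : fanoLines.card = 7 := by decide
  have hinterval : cyclicIntervals.card = 7 := by decide
  exact ⟨dilated, hTk.imp
    (image_mem_iff_mem_translates hdilated hsmul (h𝓛.trans hfano.symm).le · himage)
    (image_mem_iff_mem_translates hdilated hsmul (h𝓛.trans hinterval.symm).le · himage)⟩

theorem nonempty_mulEquiv_psl_two_seven (hΩ : Fintype.card Ω = 7)
    (hG : 56 ∣ Nat.card G) (h𝓛 : 𝓛.card = 7) (hcard : ∀ T ∈ 𝓛, T.card = 3)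
    (hsmul : ∀ g : G, ∀ T ∈ 𝓛, g • T ∈ 𝓛) : Nonempty (G ≃* PSL(2, ZMod 7)) := by
  obtain ⟨e, he⟩ :=
    exists_equiv_forall_image_mem_iff hΩ (dvd_trans (by norm_num) hG) h𝓛 hcard hsmul
  let φ : G →* Equiv.Perm (ZMod 7) := e.symm.permCongrHom.toMonoidHom.comp (MulAction.toPermHom G Ω)
  have hφ : Function.Injective φ := e.symm.permCongrHom.injective.comp MulAction.toPerm_injective
  have hrange : Nat.card φ.range = Nat.card G := Nat.card_congr (φ.ofInjective hφ).symm.toEquiv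
  have h56 : 56 ≤ Nat.card φ.range := hrange ▸ Nat.le_of_dvd Nat.card_pos hG
  rcases he with hfano | hinterval
  · have hle : φ.range ≤ collineationGroup := by
      rintro _ ⟨g, rfl⟩
      exact permCongrHom_toPermHom_mem_stabilizer hsmul hfano g
    have heq := eq_collineationGroup_of_le hle h56
    obtain ⟨ψ⟩ := nonempty_psl_mulEquiv_collineationGroup
    exact ⟨(φ.ofInjective hφ).trans ((MulEquiv.subgroupCongr heq).trans ψ.symm)⟩
  · have hle : φ.range ≤ cyclicIntervalGroup := by
      rintro _ ⟨g, rfl⟩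
      exact permCongrHom_toPermHom_mem_stabilizer hsmul hinterval g
    have := (Subgroup.card_le_of_le hle).trans card_cyclicIntervalGroup_le
    omega

end SevenPoints

/-! ### The Galois group -/

section GaloisTheory

variable {F L : Type*} [Field F] [Field L] [Algebra F L] {p : F[X]}

lemma faithfulSMul_rootSet (p : F[X]) [p.IsSplittingField F L] :
    FaithfulSMul Gal(L/F) (p.rootSet L) where
  eq_of_smul_eq_smul {σ τ} h := by
    refine AlgEquiv.coe_toAlgHom_injective
      (AlgHom.ext_of_adjoin_eq_top (IsSplittingField.adjoin_rootSet L p) fun x hx ↦ ?_)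
    exact congrArg Subtype.val (h ⟨x, hx⟩)

lemma isSplittingField_of_isSimpleGroup [FiniteDimensional F L] [IsGalois F L]
    [IsSimpleGroup Gal(L/F)] (hL : (p.map (algebraMap F L)).Splits) (hF : ¬ p.Splits) :
    p.IsSplittingField F L := by
  let E : IntermediateField F L := .adjoin F (p.rootSet L)
  have : p.IsSplittingField F E := IntermediateField.adjoin_rootSet_isSplittingField hL
  have : Normal F E := .of_isSplittingField p
  have : IsGalois F E := ⟨⟩
  rcases (inferInstance : E.fixingSubgroup.Normal).eq_bot_or_eq_top with hE | hE
  · have htop : E = ⊤ := by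
      rw [← IsGalois.fixedField_fixingSubgroup E, hE, IntermediateField.fixedField_bot]
    exact isSplittingField_iff_intermediateField.2 ⟨hL, htop⟩
  · have hbot : E = ⊥ := by
      rw [← IsGalois.fixedField_fixingSubgroup E, hE, IsGalois.fixedField_top]
    refine absurd (Splits.of_splits_map (algebraMap F L) hL fun x hx ↦ ?_) hF
    have hxE : x ∈ E := IntermediateField.subset_adjoin F _ (by simpa [rootSet] using hx)
    rwa [hbot] at hxE

end GaloisTheory

section FanoLines

variable {L : Type*} [Field L] [Algebra ℚ L] {β γ : L}

open scoped Classical in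
/-- The line of the Fano plane of roots of `f13a` attached to the root `β` of `fanoResolvent`. -/
def rootLine (β : L) : Finset (f13a.rootSet L) := {x | (x : L) ∈ (lineCubic β).roots}

lemma map_rootLine (hβ : aeval β fanoResolvent = 0) :
    ((rootLine β).map (.subtype _)).val = (lineCubic β).roots := by
  have hnodup : (lineCubic β).roots.Nodup :=
    nodup_roots (irreducible_f13a.separable.map.of_dvd (lineCubic_toPoly_dvd hβ))
  refine (Multiset.Nodup.ext (Finset.nodup _) hnodup).2 fun x ↦ ?_
  have hroot (hx : x ∈ (lineCubic β).roots) : x ∈ f13a.rootSet L :=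
    mem_rootSet.2 ⟨irreducible_f13a.ne_zero, aeval_f13a_of_mem_roots_lineCubic hβ hx⟩
  simpa [rootLine, -Finset.map_val] using hroot

lemma card_rootLine (hf : (f13a.map (algebraMap ℚ L)).Splits)
    (hβ : aeval β fanoResolvent = 0) : (rootLine β).card = 3 := by
  obtain ⟨x, y, z, h⟩ := exists_roots_lineCubic_eq hf hβ
  rw [← Finset.card_map (.subtype _), Finset.card_def, map_rootLine hβ, h]
  rfl

lemma eq_of_rootLine_eq (hf : (f13a.map (algebraMap ℚ L)).Splits)
    (hβ : aeval β fanoResolvent = 0) (hγ : aeval γ fanoResolvent = 0)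
    (h : rootLine β = rootLine γ) : β = γ := by
  obtain ⟨x, y, z, hroots⟩ := exists_roots_lineCubic_eq hf hβ
  have hroots' : (lineCubic γ).roots = {x, y, z} := by
    rw [← map_rootLine hγ, ← h, map_rootLine hβ, hroots]
  rw [eq_of_roots_lineCubic_eq hroots, eq_of_roots_lineCubic_eq hroots']

lemma map_lineCubic {K E : Type*} [Field K] [Field E] (i : K →+* E) (β : K) :
    (lineCubic β).map i = lineCubic (i β) := by
  ext <;> simp [lineCubic, Cubic.map, map_ofNat]

lemma map_mem_roots_lineCubic {K E : Type*} [Field K] [Field E] (i : K →+* E) {β x : K} :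
    i x ∈ (lineCubic (i β)).roots ↔ x ∈ (lineCubic β).roots := by
  rw [Cubic.roots, mem_roots (Cubic.ne_zero_of_a_ne_zero one_ne_zero), Cubic.roots,
    mem_roots (Cubic.ne_zero_of_a_ne_zero one_ne_zero), ← map_lineCubic, Cubic.map_toPoly,
    isRoot_map_iff i.injective]

open scoped Classical in
lemma smul_rootLine (σ : Gal(L/ℚ)) (β : L) : σ • rootLine β = rootLine (σ β) := by
  ext x
  obtain ⟨y, rfl⟩ := MulAction.surjective σ x
  simpa [rootLine] using (map_mem_roots_lineCubic (σ : L →+* L)).symm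

end FanoLines

section SplittingField

variable (L : Type*) [Field L] [Algebra ℚ L] [f13a.IsSplittingField ℚ L]

lemma splits_f13a : (f13a.map (algebraMap ℚ L)).Splits := IsSplittingField.splits L f13a

lemma natDegree_f13a : f13a.natDegree = 7 := by unfold f13a; compute_degree!

lemma natDegree_f13b : f13b.natDegree = 8 := by unfold f13b; compute_degree!

lemma fifty_six_dvd_finrank : 56 ∣ Module.finrank ℚ L := by
  have h7 := irreducible_f13a.natDegree_dvd_finrank (splits_f13a L)
  have h8 := irreducible_f13b.natDegree_dvd_finrank (splits_f13b (splits_f13a L))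
  rw [natDegree_f13a] at h7
  rw [natDegree_f13b] at h8
  exact Nat.Coprime.mul_dvd_of_dvd_of_dvd (by norm_num) h7 h8

theorem nonempty_gal_mulEquiv_psl_two_seven : Nonempty (Gal(L/ℚ) ≃* PSL(2, ZMod 7)) := by
  classical
  have hf := splits_f13a L
  have := IsSplittingField.finiteDimensional L f13a
  have : IsGalois ℚ L := .of_separable_splitting_field irreducible_f13a.separable
  have := faithfulSMul_rootSet (L := L) f13a
  have hroot (β : fanoResolvent.rootSet L) : aeval (β : L) fanoResolvent = 0 :=
    aeval_eq_zero_of_mem_rootSet β.2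
  have hinj : Function.Injective fun β : fanoResolvent.rootSet L ↦ rootLine (β : L) :=
    fun β γ h ↦ Subtype.ext (eq_of_rootLine_eq hf (hroot β) (hroot γ) h)
  refine nonempty_mulEquiv_psl_two_seven
    (𝓛 := Finset.univ.image fun β : fanoResolvent.rootSet L ↦ rootLine (β : L)) ?_ ?_ ?_ ?_ ?_
  · rw [card_rootSet_eq_natDegree irreducible_f13a.separable hf, natDegree_f13a]
  · exact IsGalois.card_aut_eq_finrank ℚ L ▸ fifty_six_dvd_finrank L
  · rw [Finset.card_image_of_injective _ hinj, Finset.card_univ,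
      card_rootSet_fanoResolvent (splits_fanoResolvent hf)]
  · simpa using fun β hβ ↦ card_rootLine hf (hroot ⟨β, hβ⟩)
  · simp only [Finset.mem_image, Finset.mem_univ, true_and]
    rintro σ _ ⟨β, rfl⟩
    exact ⟨σ • β, (smul_rootLine σ (β : L)).symm⟩

theorem isSplittingField_f13b : f13b.IsSplittingField ℚ L := by
  have := IsSplittingField.finiteDimensional L f13a
  have : IsGalois ℚ L := .of_separable_splitting_field irreducible_f13a.separable
  obtain ⟨e⟩ := nonempty_gal_mulEquiv_psl_two_seven L
  have := e.isSimpleGroup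
  refine isSplittingField_of_isSimpleGroup (splits_f13b (splits_f13a L)) fun h ↦ ?_
  have := natDegree_eq_of_degree_eq_some (h.degree_eq_one_of_irreducible irreducible_f13b)
  rw [natDegree_f13b] at this
  exact absurd this (by decide)

end SplittingField

/- The splitting field of an irreducible polynomial is the Galois closure of the number
field it defines, and `f.Gal` is its Galois group over `ℚ`. -/
theorem stmt13 :
    Irreducible f13a ∧ Irreducible f13b ∧
    Nonempty (f13a.SplittingField ≃ₐ[ℚ] f13b.SplittingField) ∧
    Nonempty (f13a.Gal ≃* PSL(2, ZMod 7)) ∧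
    Nonempty (f13b.Gal ≃* PSL(2, ZMod 7)) := by
  -- An abstract splitting field `L` has a single `ℚ`-algebra structure in sight, whereas instance
  -- search finds `DivisionRing.toRatAlgebra` on `f13a.SplittingField`.
  obtain ⟨L, _, _, _⟩ : ∃ (L : Type) (_ : Field L) (_ : Algebra ℚ L), f13a.IsSplittingField ℚ L :=
    ⟨_, _, _, .splittingField f13a⟩
  have := isSplittingField_f13b L
  obtain ⟨ψ⟩ := nonempty_gal_mulEquiv_psl_two_seven L
  let ea := IsSplittingField.algEquiv L f13a
  let eb := IsSplittingField.algEquiv L f13b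
  exact ⟨irreducible_f13a, irreducible_f13b,
    ⟨.ofRingEquiv (f := (ea.symm.trans eb).toRingEquiv) (by simp)⟩,
    ⟨ea.symm.autCongr.trans ψ⟩, ⟨eb.symm.autCongr.trans ψ⟩⟩

end
end

section
/- Let N/ℚ be a Galois extension of number fields with Gal(N/ℚ) isomorphic to the alternating group A₅ or to the symmetric group S₅. If K₅ ⊆ N is a subfield of degree 5 over ℚ and K₆ ⊆ N is a subfield of degree 6 over ℚ (so that N is the Galois closure of each), then the ratio D_{K₆}/D_{K₅} is the square of an integer: there exists a nonzero integer r with D_{K₆} = D_{K₅}·r². -/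
open scoped NumberField

/-!
Hilbert's formula writes the different of a Galois extension `N / K` as the product over
`σ ≠ 1` in `Gal(N/K)` of the ideals generated by the displacements `b - σ b`. It is checked locally:
at every prime, the ring of integers of `N` is generated by a single element, whose conjugates
account for both sides. If `a σ` denotes the norm of the displacement ideal of `σ`, comparing
`N / ℚ` with `N / K` for `K` embedded in `N` in all possible ways gives
`|D_K| ^ [N : ℚ] = ∏ σ, a σ ^ m_K(σ)`, where `m_K(σ)` is the number of embeddings `K → N` moved
by `σ`.

An element of `A₅` or `S₅` moves at most as many of the five embeddings of `K₅` as of the six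
embeddings of `K₆`, so `D_{K₅}` divides `D_{K₆}`. Moreover `√D_K` is multiplied by `σ` with the sign
of the permutation `σ` induces on the embeddings of `K`, and the two signs agree for `K₅` and `K₆`,
so `D_{K₅} D_{K₆}` is a square.
-/

open Equiv MulAction

section PermutationGroups

theorem sign_eq_neg_one_of_orderOf_eq_six {α : Type*} [Fintype α] [DecidableEq α]
    (hα : Fintype.card α ≤ 6) {σ : Perm α} (hσ : orderOf σ = 6) : Perm.sign σ = -1 := by
  have hsum : σ.cycleType.sum ≤ 6 := σ.sum_cycleType_le.trans hα
  have two_le (n : ℕ) : n ∈ σ.cycleType → 2 ≤ n := Perm.two_le_of_mem_cycleType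
  have exists_dvd (p : ℕ) (hp : p.Prime) (h6 : p ∣ 6) : ∃ n ∈ σ.cycleType, p ∣ n := by
    refine hp.prime.exists_mem_multiset_dvd (h6.trans ?_)
    rw [← hσ, ← Perm.lcm_cycleType]
    exact Multiset.lcm_dvd.2 fun _ => Multiset.dvd_prod
  have eq_zero (s : Multiset ℕ) (hs : s ≤ σ.cycleType) (h1 : s.sum ≤ 1) : s = 0 :=
    Multiset.eq_zero_of_forall_notMem fun n hn => by
      have := two_le n (Multiset.mem_of_le hs hn)
      have := Multiset.le_sum_of_mem hn
      lia
  obtain ⟨m, hm, hm2⟩ := exists_dvd 2 Nat.prime_two (by simp)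
  obtain ⟨n, hn, hn3⟩ := exists_dvd 3 Nat.prime_three (by simp)
  obtain ⟨s, hs⟩ := Multiset.exists_cons_of_mem hn
  rw [Perm.sign_of_cycleType]
  rw [hs, Multiset.sum_cons] at hsum
  obtain rfl | rfl : n = 3 ∨ n = 6 := by have := two_le n hn; lia
  · obtain ⟨t, rfl⟩ := Multiset.exists_cons_of_mem
      ((Multiset.mem_cons.1 (hs ▸ hm)).resolve_left (by lia))
    rw [Multiset.sum_cons] at hsum
    have := two_le m hm
    obtain rfl : m = 2 := by lia
    obtain rfl := eq_zero t (hs ▸ (Multiset.le_cons_self _ _).trans (Multiset.le_cons_self _ _))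
      (by lia)
    rw [hs]
    decide
  · obtain rfl := eq_zero s (hs ▸ Multiset.le_cons_self _ _) (by lia)
    rw [hs]
    decide

variable {G X Y : Type*} [Group G]

theorem card_dvd_factorial_of_mulEquiv {α : Type*} [Fintype α] [DecidableEq α]
    (hG : Nonempty (G ≃* alternatingGroup α) ∨ Nonempty (G ≃* Perm α)) :
    Nat.card G ∣ (Nat.card α).factorial := by
  rw [← Nat.card_perm]
  rcases hG with ⟨⟨e⟩⟩ | ⟨⟨e⟩⟩
  · exact Nat.card_congr e.toEquiv ▸ Subgroup.card_subgroup_dvd_card _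
  · exact (Nat.card_congr e.toEquiv).dvd

theorem index_dvd_two_of_normal {α : Type*} [Fintype α] [DecidableEq α] (hα : 5 ≤ Nat.card α)
    (hG : Nonempty (G ≃* alternatingGroup α) ∨ Nonempty (G ≃* Perm α))
    (H : Subgroup G) [H.Normal] (hH : H ≠ ⊥) : H.index ∣ 2 := by
  rcases hG with ⟨⟨e⟩⟩ | ⟨⟨e⟩⟩
  · have := alternatingGroup.isSimpleGroup hα
    have := e.isSimpleGroup
    simp [(inferInstance : H.Normal).eq_bot_or_eq_top.resolve_left hH]
  · have hnormal : (H.map (e : G →* Perm α)).Normal := .map inferInstance _ e.surjective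
    have hnontrivial : Nontrivial (H.map (e : G →* Perm α)) := by
      rwa [Subgroup.nontrivial_iff_ne_bot, Ne,
        Subgroup.map_eq_bot_iff_of_injective _ e.injective]
    have : Nontrivial α := Finite.one_lt_card_iff_nontrivial.1 (by lia)
    rw [← Subgroup.index_map_equiv H e, ← alternatingGroup.index_eq_two (α := α)]
    exact Subgroup.index_dvd_of_le (Perm.alternatingGroup_le_of_normal hα hnontrivial)

theorem faithfulSMul_of_isPretransitive {α : Type*} [Fintype α] [DecidableEq α]
    (hα : 5 ≤ Nat.card α) (hG : Nonempty (G ≃* alternatingGroup α) ∨ Nonempty (G ≃* Perm α))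
    [MulAction G X] [IsPretransitive G X] (hX : 2 < Nat.card X) : FaithfulSMul G X := by
  rw [faithfulSMul_iff]
  by_contra! ⟨g, hg, hg1⟩
  obtain ⟨x⟩ : Nonempty X := (Nat.card_pos_iff.1 (by lia)).1
  have hker : (toPermHom G X).ker ≠ ⊥ := fun h =>
    hg1 (Subgroup.mem_bot.1 (h ▸ MonoidHom.mem_ker.2 (Equiv.ext hg)))
  have hle : (toPermHom G X).ker ≤ stabilizer G x := fun g hg =>
    DFunLike.congr_fun (MonoidHom.mem_ker.1 hg) x
  have hdvd : Nat.card X ∣ 2 := by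
    rw [← index_stabilizer_of_transitive G x]
    exact (Subgroup.index_dvd_of_le hle).trans (index_dvd_two_of_normal hα hG _ hker)
  exact (Nat.le_of_dvd two_pos hdvd).not_gt hX

section Action

variable [MulAction G X] [MulAction G Y]

theorem toPermHom_injective [FaithfulSMul G X] : Function.Injective (toPermHom G X) :=
  toPerm_injective

variable [Fintype X] [DecidableEq X] [Fintype Y] [DecidableEq Y]

theorem card_support_toPermHom_eq_zero_iff [FaithfulSMul G X] {g : G} :
    (toPermHom G X g).support.card = 0 ↔ g = 1 := by
  rw [Perm.card_support_eq_zero, map_eq_one_iff _ toPermHom_injective]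

theorem sign_toPermHom_eq_neg_one_of_orderOf_eq_six [FaithfulSMul G X] (hX : Fintype.card X ≤ 6)
    {g : G} (hg : orderOf g = 6) : Perm.sign (toPermHom G X g) = -1 :=
  sign_eq_neg_one_of_orderOf_eq_six hX <|
    (orderOf_injective (toPermHom G X) toPermHom_injective g).trans hg

-- `A₅` is perfect and `S₅` has only one nontrivial character to `±1`; on `S₅` both signs are
-- nontrivial because they take the value `-1` at elements of order `6`.
theorem sign_toPermHom_eq_of_card_le_six
    (hG : Nonempty (G ≃* alternatingGroup (Fin 5)) ∨ Nonempty (G ≃* Perm (Fin 5)))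
    [FaithfulSMul G X] (hX : Fintype.card X ≤ 6) [FaithfulSMul G Y] (hY : Fintype.card Y ≤ 6)
    (g : G) : Perm.sign (toPermHom G X g) = Perm.sign (toPermHom G Y g) := by
  rcases hG with ⟨⟨e⟩⟩ | ⟨⟨e⟩⟩
  · have map_eq_one (χ : alternatingGroup (Fin 5) →* ℤˣ) (h) : χ h = 1 :=
      Abelianization.commutator_subset_ker χ <| by
        rw [commutator_alternatingGroup_eq_top (by simp)]
        trivial
    have := (map_eq_one ((Perm.sign.comp (toPermHom G X)).comp e.symm) (e g)).trans
      (map_eq_one ((Perm.sign.comp (toPermHom G Y)).comp e.symm) (e g)).symm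
    simpa using this
  · let h : Perm (Fin 5) := c[0, 1, 2] * c[3, 4]
    have hh : orderOf (e.symm h) = 6 := by
      rw [MulEquiv.orderOf_eq, orderOf_eq_iff (by simp)]
      decide +kernel
    have eq_sign (χ : Perm (Fin 5) →* ℤˣ) (hχ : χ h = -1) : χ = Perm.sign :=
      Perm.eq_sign_of_surjective_hom fun z =>
        (Int.units_eq_one_or z).elim (fun hz => ⟨1, by simp [hz]⟩) (fun hz => ⟨h, by simp [hz, hχ]⟩)
    have := (eq_sign ((Perm.sign.comp (toPermHom G X)).comp e.symm)
      (sign_toPermHom_eq_neg_one_of_orderOf_eq_six hX hh)).trans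
      (eq_sign ((Perm.sign.comp (toPermHom G Y)).comp e.symm)
      (sign_toPermHom_eq_neg_one_of_orderOf_eq_six hY hh)).symm
    simpa using DFunLike.congr_fun this (e g)

theorem pow_four_eq_one_of_card_support_le_four [FaithfulSMul G Y] [IsPretransitive G Y]
    (hG : Nat.card G ∣ 120) (hY : Fintype.card Y = 6) {g : G}
    (hg : (toPermHom G Y g).support.card ≤ 4) : g ^ 4 = 1 := by
  have hle : (toPermHom G Y (g ^ 4)).support.card ≤ 4 := by
    rw [map_pow]
    exact (Finset.card_le_card (Perm.support_pow_le _ 4)).trans hg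
  have hpow : (g ^ 4) ^ 5 = 1 := by
    obtain ⟨y, hy⟩ : ∃ y : Y, g • y = y := by
      by_contra! h
      have : (toPermHom G Y g).support = Finset.univ := Finset.ext fun y => by simp [h y]
      rw [this, Finset.card_univ, hY] at hg
      lia
    have hstab : Nat.card (stabilizer G y) ∣ 20 := by
      have := (stabilizer G y).card_mul_index
      rw [index_stabilizer_of_transitive, Nat.card_eq_fintype_card (α := Y), hY] at this
      exact Nat.dvd_of_mul_dvd_mul_right (by simp : 0 < 6) (this ▸ hG)
    rw [← pow_mul]
    exact orderOf_dvd_iff_pow_eq_one.1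
      ((Subgroup.orderOf_dvd_natCard _ (mem_stabilizer_iff.2 hy)).trans hstab)
  have : Fact (Nat.Prime 5) := ⟨by norm_num⟩
  have hmod := Perm.card_compl_support_modEq (p := 5) (n := 1) (σ := toPermHom G Y (g ^ 4))
    (by rw [pow_one, ← map_pow, hpow, map_one])
  rw [Finset.card_compl, hY, Nat.ModEq] at hmod
  exact (card_support_toPermHom_eq_zero_iff (X := Y)).1 (by lia)

-- Otherwise `g ^ 4 = 1` and parity leaves only one case: `g` is a transposition of `Y` and a double
-- transposition of `X`, against the agreement of signs.
theorem card_support_le_card_support_of_sign_eq [FaithfulSMul G Y] [IsPretransitive G Y]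
    (hG : Nat.card G ∣ 120) (hX : Fintype.card X = 5) (hY : Fintype.card Y = 6) {g : G}
    (hsign : Perm.sign (toPermHom G X g) = Perm.sign (toPermHom G Y g)) :
    (toPermHom G X g).support.card ≤ (toPermHom G Y g).support.card := by
  by_contra! hlt
  have hX5 : (toPermHom G X g).support.card ≤ 5 := hX ▸ Finset.card_le_univ _
  have hg4 : g ^ 4 = 1 := pow_four_eq_one_of_card_support_le_four hG hY (by lia)
  have hmodX := Perm.card_compl_support_modEq (p := 2) (n := 2) (σ := toPermHom G X g)
    (by rw [← map_pow]; exact hg4 ▸ map_one _)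
  have hmodY := Perm.card_compl_support_modEq (p := 2) (n := 2) (σ := toPermHom G Y g)
    (by rw [← map_pow]; exact hg4 ▸ map_one _)
  rw [Finset.card_compl, Nat.ModEq] at hmodX hmodY
  have hY0 : (toPermHom G Y g).support.card ≠ 0 := by
    intro h0
    obtain rfl := card_support_toPermHom_eq_zero_iff.1 h0
    simp only [map_one, Perm.support_one, Finset.card_empty, lt_self_iff_false] at hlt
  have hswap : (toPermHom G Y g).IsSwap := Perm.card_support_eq_two.1 (by lia)
  have hsq : g ^ 2 = 1 := by
    obtain ⟨a, b, -, hab⟩ := hswap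
    rw [← map_eq_one_iff (toPermHom G Y) toPermHom_injective, map_pow, hab, sq, swap_mul_self]
  have hX4 : (toPermHom G X g).support.card = 4 := by lia
  rw [hswap.sign_eq, Perm.sign_of_pow_two_eq_one (by rw [← map_pow, hsq, map_one]),
    Perm.card_fixedPoints, Perm.sum_cycleType, hX4, hX] at hsign
  revert hsign
  decide

end Action

end PermutationGroups

section EmbeddingAction

variable {F K N : Type*} [Field F] [Field K] [Field N] [Algebra F K] [Algebra F N]

/-- The action of the Galois group of `N/F` on the `F`-embeddings of `K` into `N`, by
composition. -/
instance embeddingMulAction : MulAction Gal(N/F) (K →ₐ[F] N) where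
  smul σ φ := (σ : N →ₐ[F] N).comp φ
  one_smul _ := rfl
  mul_smul _ _ _ := rfl

instance embedding_isPretransitive [Normal F N] : IsPretransitive Gal(N/F) (K →ₐ[F] N) where
  exists_smul_eq φ ψ := by
    let := φ.toRingHom.toAlgebra
    have : IsScalarTower F K N := .of_algebraMap_eq fun x => (φ.commutes x).symm
    exact ⟨AlgEquiv.ofBijective (ψ.liftNormal N) ((ψ.liftNormal N).normal_bijective F N N),
      AlgHom.ext (ψ.liftNormal_commutes N)⟩

variable [Algebra K N] [IsScalarTower F K N]

theorem minpoly_splits_of_tower [Normal F N] (x : K) :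
    ((minpoly F x).map (algebraMap F N)).Splits := by
  rw [← minpoly.algebraMap_eq (algebraMap K N).injective x]
  exact Normal.splits inferInstance _

open scoped Classical in
theorem prod_restrictScalars_eq_prod_filter [Fintype Gal(N/F)] [Fintype Gal(N/K)]
    {M : Type*} [CommMonoid M] (f : Gal(N/F) → M) :
    ∏ σ ∈ Finset.univ.erase (1 : Gal(N/K)), f (σ.restrictScalars F) =
      ∏ σ ∈ Finset.univ.erase (1 : Gal(N/F)) with
        σ • IsScalarTower.toAlgHom F K N = IsScalarTower.toAlgHom F K N, f σ := by
  refine Finset.prod_bij (fun σ _ => σ.restrictScalars F) (fun σ hσ => ?_)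
    (fun σ _ τ _ h => AlgEquiv.restrictScalars_injective F h) (fun σ hσ => ?_) fun _ _ => rfl
  · simp only [Finset.mem_filter, Finset.mem_erase, Finset.mem_univ, and_true] at hσ ⊢
    exact ⟨fun h => hσ (AlgEquiv.restrictScalars_injective F h), AlgHom.ext σ.commutes⟩
  · simp only [Finset.mem_filter, Finset.mem_erase, Finset.mem_univ, and_true] at hσ
    refine ⟨AlgEquiv.ofRingEquiv (f := σ.toRingEquiv) (DFunLike.congr_fun hσ.2), ?_, rfl⟩
    simp only [Finset.mem_erase, Finset.mem_univ, and_true]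
    exact fun h => hσ.1 (AlgEquiv.ext fun y => DFunLike.congr_fun h y)

variable [FiniteDimensional F K] [IsGalois F N]

theorem card_embedding_eq_finrank :
    Fintype.card (K →ₐ[F] N) = Module.finrank F K := by
  have := Algebra.isSeparable_tower_bot_of_isSeparable F K N
  exact AlgHom.card_of_splits F K N minpoly_splits_of_tower

open scoped Classical in
theorem exists_sq_eq_discr_and_forall_apply_eq_sign_mul {ι : Type*} [Fintype ι]
    (b : Module.Basis ι F K) :
    ∃ δ : N, δ ^ 2 = algebraMap F N (Algebra.discr F b) ∧
      ∀ σ : Gal(N/F), σ δ = (Perm.sign (toPermHom _ (K →ₐ[F] N) σ) : ℤ) * δ := by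
  have := Algebra.isSeparable_tower_bot_of_isSeparable F K N
  let e : ι ≃ (K →ₐ[F] N) := Fintype.equivOfCardEq <| by
    rw [card_embedding_eq_finrank, Module.finrank_eq_card_basis b]
  let M := Algebra.embeddingsMatrixReindex F N b e
  refine ⟨M.det, ?_, fun σ => ?_⟩
  · let f := Algebra.IsAlgebraic.algHomEquivAlgHomOfSplits (F := F) (K := K) (AlgebraicClosure N) N
      minpoly_splits_of_tower
    apply (algebraMap N (AlgebraicClosure N)).injective
    rw [← IsScalarTower.algebraMap_apply,
      Algebra.discr_eq_det_embeddingsMatrixReindex_pow_two F _ b (e.trans f), map_pow,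
      RingHom.map_det]
    rfl
  · let π : Perm ι := e.symm.permCongr (toPermHom _ (K →ₐ[F] N) σ)
    have hM : (σ : N →+* N).mapMatrix M = M.submatrix id π := by
      ext i j
      change (σ • e j) (b i) = e (e.symm (σ • e j)) (b i)
      rw [apply_symm_apply]
    calc σ M.det = (M.submatrix id π).det := by rw [← hM]; exact RingHom.map_det (σ : N →+* N) M
      _ = _ := by rw [Matrix.det_permute', Perm.sign_permCongr]

open scoped Classical in
theorem isSquare_discr_mul_discr {L : Type*} [Field L] [Algebra F L] [Algebra L N]
    [IsScalarTower F L N] [FiniteDimensional F L] {ι κ : Type*} [Fintype ι] [Fintype κ]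
    (b : Module.Basis ι F K) (c : Module.Basis κ F L)
    (hsign : ∀ σ : Gal(N/F), Perm.sign (toPermHom _ (K →ₐ[F] N) σ) =
      Perm.sign (toPermHom _ (L →ₐ[F] N) σ)) :
    IsSquare (Algebra.discr F b * Algebra.discr F c) := by
  obtain ⟨δ, hδ, hσδ⟩ := exists_sq_eq_discr_and_forall_apply_eq_sign_mul (N := N) b
  obtain ⟨ε, hε, hσε⟩ := exists_sq_eq_discr_and_forall_apply_eq_sign_mul (N := N) c
  have hfixed (σ : Gal(N/F)) : σ (δ * ε) = δ * ε := by
    rw [map_mul, hσδ, hσε, hsign, mul_mul_mul_comm, ← Int.cast_mul, ← Units.val_mul,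
      Int.units_mul_self, Units.val_one, Int.cast_one, one_mul]
  obtain ⟨a, ha⟩ := IntermediateField.mem_bot.1 ((InfiniteGalois.mem_bot_iff_fixed _).2 hfixed)
  refine ⟨a, (algebraMap F N).injective ?_⟩
  rw [map_mul, map_mul, ← hδ, ← hε, ha]
  ring

open scoped Classical in
theorem isSquare_numberFieldDiscr_mul_numberFieldDiscr {K L N : Type*} [Field K] [NumberField K]
    [Field L] [NumberField L] [Field N] [CharZero N] [IsGalois ℚ N] [Algebra K N] [Algebra L N]
    (hsign : ∀ σ : Gal(N/ℚ), Perm.sign (toPermHom _ (K →ₐ[ℚ] N) σ) =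
      Perm.sign (toPermHom _ (L →ₐ[ℚ] N) σ)) :
    IsSquare (NumberField.discr K * NumberField.discr L) := by
  rw [← Rat.isSquare_intCast_iff, Int.cast_mul, NumberField.coe_discr, NumberField.coe_discr]
  exact isSquare_discr_mul_discr _ _ hsign

end EmbeddingAction

section SurjectsModulo

variable {R B : Type*} [CommRing R] [CommRing B] [Algebra R B]

/-- The subalgebra `S` of `B` surjects onto `B ⧸ I`. For `I` the powers of a prime this is how
`S` is said to be dense in the completion of `B` at that prime. -/
def SurjectsModulo (S : Subalgebra R B) (I : Ideal B) : Prop :=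
  ∀ b, ∃ s ∈ S, b - s ∈ I

namespace SurjectsModulo

theorem adjoin_singleton_of_sub_mem {I : Ideal B} {x y : B}
    (h : SurjectsModulo (Algebra.adjoin R {y}) I) (hxy : x - y ∈ I) :
    SurjectsModulo (Algebra.adjoin R {x}) I := by
  intro b
  obtain ⟨s, hs, hbs⟩ := h b
  obtain ⟨f, rfl⟩ := Algebra.adjoin_mem_exists_aeval R y hs
  refine ⟨Polynomial.aeval x f, Polynomial.aeval_mem_adjoin_singleton R x, ?_⟩
  have hf : Polynomial.aeval y f - Polynomial.aeval x f ∈ I := by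
    simp only [← Polynomial.eval_map_algebraMap]
    exact I.mem_of_dvd (Polynomial.sub_dvd_eval_sub y x _) (neg_sub x y ▸ I.neg_mem hxy)
  simpa using I.add_mem hbs hf

theorem exists_mem_pow_and_sub_mem_pow_succ {S : Subalgebra R B} {P : Ideal B}
    (h : SurjectsModulo S (P ^ 2)) (m : ℕ) {b : B} (hb : b ∈ P ^ m) :
    ∃ s ∈ S, s ∈ P ^ m ∧ b - s ∈ P ^ (m + 1) := by
  induction m generalizing b with
  | zero =>
    obtain ⟨s, hs, hbs⟩ := h b
    exact ⟨s, hs, by simp, Ideal.pow_le_pow_right one_le_two hbs⟩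
  | succ m ih =>
    rw [pow_succ] at hb
    induction hb using Submodule.mul_induction_on' with
    | mem_mul_mem u hu v hv =>
      obtain ⟨s, hs, hsm, hus⟩ := ih hu
      obtain ⟨t, ht, hvt⟩ := h v
      have htP : t ∈ P := by
        simpa using P.sub_mem hv (Ideal.pow_le_self two_ne_zero hvt)
      refine ⟨s * t, mul_mem hs ht, pow_succ P m ▸ Ideal.mul_mem_mul hsm htP, ?_⟩
      have hsplit : u * v - s * t = u * (v - t) + (u - s) * t := by ring
      rw [hsplit]
      refine Ideal.add_mem _ ?_ ?_
      · rw [add_assoc, pow_add]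
        exact Ideal.mul_mem_mul hu hvt
      · rw [pow_succ]
        exact Ideal.mul_mem_mul hus htP
    | add u _ v _ hu hv =>
      obtain ⟨s, hs, hsm, hus⟩ := hu
      obtain ⟨t, ht, htm, hvt⟩ := hv
      exact ⟨s + t, add_mem hs ht, add_mem hsm htm, by
        rw [add_sub_add_comm]
        exact add_mem hus hvt⟩

theorem pow {S : Subalgebra R B} {P : Ideal B} (h : SurjectsModulo S (P ^ 2)) (m : ℕ) :
    SurjectsModulo S (P ^ m) := by
  intro b
  induction m with
  | zero => exact ⟨0, zero_mem S, by simp⟩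
  | succ m ih =>
    obtain ⟨s, hs, hbs⟩ := ih
    obtain ⟨t, ht, -, hst⟩ := h.exists_mem_pow_and_sub_mem_pow_succ m hbs
    exact ⟨s + t, add_mem hs ht, by rwa [← sub_sub]⟩

theorem sq_of_mem [IsDedekindDomain B] {S : Subalgebra R B} {P : Ideal B} [P.IsPrime]
    (hP : P ≠ ⊥) (h : SurjectsModulo S P) {ϖ : B} (hϖS : ϖ ∈ S) (hϖ : ϖ ∈ P) (hϖ2 : ϖ ∉ P ^ 2) :
    SurjectsModulo S (P ^ 2) := by
  intro b
  obtain ⟨s, hs, hbs⟩ := h b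
  obtain ⟨d, e, he, hde⟩ := Ideal.exists_mul_add_mem_pow_succ (i := 1) hP ϖ (b - s)
    (by rwa [pow_one]) hϖ2 (by rwa [pow_one])
  obtain ⟨t, ht, hdt⟩ := h d
  refine ⟨s + ϖ * t, add_mem hs (mul_mem hϖS ht), ?_⟩
  have hsplit : b - (s + ϖ * t) = ϖ * (d - t) + e := by linear_combination -hde
  rw [hsplit, sq]
  exact Ideal.add_mem _ (Ideal.mul_mem_mul hϖ hdt) (sq P ▸ he)

end SurjectsModulo

section FiniteResidueField

variable {P : Ideal B} [Finite (B ⧸ P)]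

theorem card_quotient_mem : (Nat.card (B ⧸ P) : B) ∈ P := by
  let := Fintype.ofFinite (B ⧸ P)
  rw [← Ideal.Quotient.eq_zero_iff_mem, map_natCast, Nat.card_eq_fintype_card]
  exact Nat.cast_card_eq_zero (B ⧸ P)

theorem pow_card_quotient_add_sub_notMem_sq {ζ π : B} (hζ : ζ ^ Nat.card (B ⧸ P) - ζ ∈ P ^ 2)
    (hπ : π ∈ P) (hπ2 : π ∉ P ^ 2) :
    (ζ + π) ^ Nat.card (B ⧸ P) - (ζ + π) ∉ P ^ 2 := by
  set q := Nat.card (B ⧸ P)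
  intro hmem
  obtain ⟨k, hk⟩ := Polynomial.powAddExpansion ζ π q
  have hqπ : q * π ∈ P ^ 2 := sq P ▸ Ideal.mul_mem_mul card_quotient_mem hπ
  have hsplit : π = (ζ ^ q - ζ) + ζ ^ (q - 1) * (q * π) + k * π ^ 2 - ((ζ + π) ^ q - (ζ + π)) := by
    rw [hk]
    ring
  refine hπ2 (hsplit ▸ sub_mem (add_mem (add_mem hζ ?_) ?_) hmem)
  · exact Ideal.mul_mem_left _ _ hqπ
  · exact Ideal.mul_mem_left _ _ (Ideal.pow_mem_pow hπ 2)

variable [P.IsMaximal]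

theorem pow_card_quotient_sub_self_mem (b : B) : b ^ Nat.card (B ⧸ P) - b ∈ P := by
  let := Ideal.Quotient.field P
  let := Fintype.ofFinite (B ⧸ P)
  rw [← Ideal.Quotient.eq, map_pow, Nat.card_eq_fintype_card, FiniteField.pow_card]

variable (R P) in
theorem exists_notMem_surjectsModulo_adjoin :
    ∃ ζ : B, ζ ∉ P ∧ SurjectsModulo (Algebra.adjoin R {ζ}) P := by
  let := Ideal.Quotient.field P
  obtain ⟨g, hg⟩ := IsCyclic.exists_generator (α := (B ⧸ P)ˣ)
  obtain ⟨ζ, hζ⟩ := Ideal.Quotient.mk_surjective (g : B ⧸ P)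
  refine ⟨ζ, fun h => g.ne_zero (hζ ▸ Ideal.Quotient.eq_zero_iff_mem.2 h), fun b => ?_⟩
  by_cases hb : b ∈ P
  · exact ⟨0, zero_mem _, by rwa [sub_zero]⟩
  have hb0 : Ideal.Quotient.mk P b ≠ 0 := mt Ideal.Quotient.eq_zero_iff_mem.1 hb
  obtain ⟨n, hn⟩ := (mem_powers_iff_mem_zpowers (y := Units.mk0 _ hb0)).2 (hg _)
  refine ⟨ζ ^ n, pow_mem (Algebra.self_mem_adjoin_singleton R ζ) n, ?_⟩
  rw [← Ideal.Quotient.eq, map_pow, hζ]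
  exact (congrArg Units.val hn).symm

variable (R) in
-- If `ζ ^ q - ζ`, with `q` the order of the residue field, is not a uniformizer at `P`, then it
-- becomes one after adding a uniformizer to `ζ`.
theorem exists_notMem_surjectsModulo_adjoin_sq [IsDedekindDomain B] (hP : P ≠ ⊥) :
    ∃ ζ : B, ζ ∉ P ∧ SurjectsModulo (Algebra.adjoin R {ζ}) (P ^ 2) := by
  obtain ⟨ζ, hζP, hζ⟩ := exists_notMem_surjectsModulo_adjoin R P
  have sq_of_notMem {z : B} (h : SurjectsModulo (Algebra.adjoin R {z}) P)
      (hz : z ^ Nat.card (B ⧸ P) - z ∉ P ^ 2) : SurjectsModulo (Algebra.adjoin R {z}) (P ^ 2) := by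
    have hzS := Algebra.self_mem_adjoin_singleton R z
    exact h.sq_of_mem hP (sub_mem (pow_mem hzS _) hzS) (pow_card_quotient_sub_self_mem z) hz
  by_cases hζ2 : ζ ^ Nat.card (B ⧸ P) - ζ ∈ P ^ 2
  · obtain ⟨π, hπ, hπ2⟩ :=
      Ideal.exists_mem_pow_notMem_pow_succ P hP (Ideal.IsMaximal.ne_top inferInstance) 1
    rw [pow_one] at hπ
    exact ⟨ζ + π, fun h => hζP ((P.add_mem_iff_left hπ).1 h),
      sq_of_notMem (hζ.adjoin_singleton_of_sub_mem (by simpa using hπ))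
        (pow_card_quotient_add_sub_notMem_sq hζ2 hπ hπ2)⟩
  · exact ⟨ζ, hζP, sq_of_notMem hζ hζ2⟩

end FiniteResidueField

theorem mul_pow_mem_conductor {P Q : Ideal B} {p s : R} {e k : ℕ} {x : B}
    (hp : Ideal.span {algebraMap R B p} = P ^ e * Q) (hxQ : x ∈ Q)
    (hx : SurjectsModulo (Algebra.adjoin R {x}) (P ^ (e * k)))
    (hs : algebraMap R B (p ^ k * s) ∈ conductor R x) :
    algebraMap R B s * x ^ k ∈ conductor R x := by
  have hxS := Algebra.self_mem_adjoin_singleton R x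
  refine mem_conductor_iff.2 fun b => ?_
  obtain ⟨z, hz, hbz⟩ := hx b
  have hmem : (b - z) * x ^ k ∈ Ideal.span {algebraMap R B p ^ k} := by
    rw [← Ideal.span_singleton_pow, hp, mul_pow, ← pow_mul]
    exact Ideal.mul_mem_mul hbz (Ideal.pow_mem_pow hxQ k)
  obtain ⟨w, hw⟩ := Ideal.mem_span_singleton'.1 hmem
  have hsplit : algebraMap R B s * x ^ k * b =
      algebraMap R B s * x ^ k * z + algebraMap R B (p ^ k * s) * w := by
    rw [map_mul, map_pow]
    linear_combination -algebraMap R B s * hw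
  rw [hsplit]
  exact add_mem (mul_mem (mul_mem (Subalgebra.algebraMap_mem _ s) (pow_mem hxS k)) hz)
    (mem_conductor_iff.1 hs w)

end SurjectsModulo

section LocalGenerators

theorem exists_span_eq_pow_mul_and_isCoprime {B : Type*} [CommRing B] [IsDedekindDomain B]
    {P : Ideal B} [P.IsMaximal] (hP : P ≠ ⊥) {a : B} (ha : a ≠ 0) :
    ∃ (e : ℕ) (Q : Ideal B), Ideal.span {a} = P ^ e * Q ∧ IsCoprime P Q := by
  have hfin : FiniteMultiplicity P (Ideal.span {a}) :=
    .of_prime_left (Ideal.prime_of_isPrime hP inferInstance) (by simpa using ha)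
  obtain ⟨Q, hQ, hPQ⟩ := hfin.exists_eq_pow_mul_and_not_dvd
  refine ⟨_, Q, hQ, Ideal.isCoprime_iff_codisjoint.2 ?_⟩
  exact (Ideal.IsMaximal.out (I := P)).not_le_iff_codisjoint.1 (mt Ideal.dvd_iff_le.2 hPQ)

open IntermediateField in
theorem exists_adjoin_add_nsmul_eq_top {F E : Type*} [Field F] [CharZero F] [Field E] [Algebra F E]
    [Algebra.IsAlgebraic F E] {θ : E} (hθ : F⟮θ⟯ = ⊤) (y : E) : ∃ n : ℕ, F⟮y + n • θ⟯ = ⊤ := by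
  have := Field.finite_intermediateField_of_exists_primitive_element F E ⟨θ, hθ⟩
  obtain ⟨m, n, hmn, heq⟩ := Finite.exists_ne_map_eq_of_infinite fun n : ℕ => F⟮y + n • θ⟯
  refine ⟨m, top_unique (hθ ▸ adjoin_simple_le_iff.2 ?_)⟩
  have hsub : ((m : F) - n) • θ ∈ F⟮y + m • θ⟯ := by
    have hn : y + n • θ ∈ F⟮y + m • θ⟯ := heq ▸ mem_adjoin_simple_self F _
    convert sub_mem (mem_adjoin_simple_self F _) hn using 1
    rw [sub_smul, Nat.cast_smul_eq_nsmul, Nat.cast_smul_eq_nsmul, add_sub_add_left_eq_sub]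
  exact (F⟮y + m • θ⟯.toSubmodule.smul_mem_iff (sub_ne_zero.2 (Nat.cast_injective.ne hmn))).1 hsub

variable {N : Type*} [Field N] [NumberField N]

open IntermediateField in
theorem exists_adjoin_eq_top_and_sub_mem {I : Ideal (𝓞 N)} (hI : I ≠ ⊥) (y : 𝓞 N) :
    ∃ x : 𝓞 N, Algebra.adjoin ℚ {(x : N)} = ⊤ ∧ x - y ∈ I := by
  obtain ⟨θ, hθ⟩ := Field.exists_primitive_element ℚ N
  obtain ⟨d, hd, hdθ⟩ := IsAlgebraic.exists_integral_multiple (R := ℤ) (z := θ)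
    ((IsFractionRing.isAlgebraic_iff ℤ ℚ N).2 (Algebra.IsAlgebraic.isAlgebraic θ))
  let t : 𝓞 N := Ideal.absNorm I * ⟨d • θ, hdθ⟩
  have htI : t ∈ I := I.mul_mem_right _ (Ideal.absNorm_mem I)
  have htθ : (t : N) = ((Ideal.absNorm I : ℚ) * d) • θ := by
    rw [mul_smul, Int.cast_smul_eq_zsmul, Nat.cast_smul_eq_nsmul, nsmul_eq_mul]
    exact (map_mul (algebraMap (𝓞 N) N) _ _).trans (by rw [map_natCast]; rfl)
  have ht : ℚ⟮(t : N)⟯ = ⊤ := by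
    have ha : (Ideal.absNorm I : ℚ) * d ≠ 0 :=
      mul_ne_zero (Nat.cast_ne_zero.2 (mt Ideal.absNorm_eq_zero_iff.1 hI)) (Int.cast_ne_zero.2 hd)
    refine top_unique (hθ ▸ adjoin_simple_le_iff.2 ?_)
    exact (ℚ⟮(t : N)⟯.toSubmodule.smul_mem_iff ha).1 (htθ ▸ mem_adjoin_simple_self ℚ _)
  obtain ⟨n, hn⟩ := exists_adjoin_add_nsmul_eq_top ht (y : N)
  refine ⟨y + n • t, ?_, ?_⟩
  · rw [← adjoin_simple_eq_top_iff_of_isAlgebraic (Algebra.IsAlgebraic.isAlgebraic _)]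
    simpa using hn
  · rw [add_sub_cancel_left]
    exact I.nsmul_mem htI n

theorem conductor_ne_bot {x : 𝓞 N} (hx : Algebra.adjoin ℚ {(x : N)} = ⊤) :
    conductor ℤ x ≠ ⊥ := by
  intro h
  have hspan := conductor_mul_differentIdeal ℤ ℚ N x hx
  rw [h, Ideal.bot_mul, eq_comm, Ideal.span_singleton_eq_bot] at hspan
  have hsep := (Algebra.IsSeparable.isSeparable ℚ (x : N)).aeval_derivative_ne_zero
    (minpoly.aeval ℚ (x : N))
  rw [minpoly.isIntegrallyClosed_eq_field_fractions ℚ N x.isIntegral, Polynomial.derivative_map,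
    Polynomial.aeval_map_algebraMap, Polynomial.aeval_algebraMap_apply, hspan, map_zero] at hsep
  exact hsep rfl

theorem exists_adjoin_eq_top_and_surjectsModulo {P Q : Ideal (𝓞 N)} [P.IsMaximal] (hP : P ≠ ⊥)
    (hQ : Q ≠ ⊥) (hPQ : IsCoprime P Q) :
    ∃ x ∈ Q, x ∉ P ∧ Algebra.adjoin ℚ {(x : N)} = ⊤ ∧
      SurjectsModulo (Algebra.adjoin ℤ {x}) (P ^ 2) := by
  have := Ideal.finiteQuotientOfFreeOfNeBot P hP
  obtain ⟨ζ, hζP, hζ⟩ := exists_notMem_surjectsModulo_adjoin_sq ℤ hP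
  obtain ⟨i, hi, j, hj, hij⟩ := Ideal.isCoprime_iff_exists.1 (hPQ.pow_left (m := 2))
  obtain ⟨x, hx, hxj⟩ := exists_adjoin_eq_top_and_sub_mem
    (I := P ^ 2 * Q) (mul_ne_zero (pow_ne_zero 2 hP) hQ) (ζ * j)
  have hxPQ : x - ζ * j ∈ P ^ 2 ⊓ Q := Ideal.mul_le_inf hxj
  have hxQ : x ∈ Q := by
    simpa using Q.add_mem hxPQ.2 (Q.mul_mem_left ζ hj)
  have hxζ : x - ζ ∈ P ^ 2 := by
    have hsplit : x - ζ = (x - ζ * j) - ζ * i := by linear_combination ζ * hij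
    exact hsplit ▸ sub_mem hxPQ.1 (Ideal.mul_mem_left _ ζ hi)
  refine ⟨x, hxQ, fun hxP => hζP ?_, hx, hζ.adjoin_singleton_of_sub_mem hxζ⟩
  simpa using P.sub_mem hxP (Ideal.pow_le_self two_ne_zero hxζ)

-- If `(p) = P ^ e * Q` with `Q` prime to `P`, choosing `x ∈ Q` trades the `p`-part of a
-- denominator for a power of `x`, which is a unit at `P`.
theorem exists_adjoin_eq_top_and_not_conductor_le {P : Ideal (𝓞 N)} [P.IsMaximal] (hP : P ≠ ⊥) :
    ∃ x : 𝓞 N, Algebra.adjoin ℚ {(x : N)} = ⊤ ∧ ¬ conductor ℤ x ≤ P := by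
  obtain ⟨p, hp⟩ := IsPrincipalIdealRing.principal (P.under ℤ)
  rw [Ideal.submodule_span_eq] at hp
  have hp0 : p ≠ 0 := fun h => P.under_ne_bot ℤ hP (by rw [hp, h, Ideal.span_singleton_zero])
  have hprime : Prime p := (Ideal.span_singleton_prime hp0).1 (hp ▸ inferInstance)
  obtain ⟨e, Q, hQ, hPQ⟩ := exists_span_eq_pow_mul_and_isCoprime hP
    ((map_ne_zero_iff (algebraMap ℤ (𝓞 N)) (FaithfulSMul.algebraMap_injective _ _)).2 hp0)
  have hQ0 : Q ≠ ⊥ := by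
    rintro rfl
    simp [hp0] at hQ
  obtain ⟨x, hxQ, hxP, hx, hxsurj⟩ := exists_adjoin_eq_top_and_surjectsModulo hP hQ0 hPQ
  obtain ⟨a, ha, ha0⟩ := Submodule.exists_mem_ne_zero_of_ne_bot
    ((conductor ℤ x).under_ne_bot ℤ (conductor_ne_bot hx))
  obtain ⟨s, has, hs⟩ :=
    (FiniteMultiplicity.of_prime_left hprime ha0).exists_eq_pow_mul_and_not_dvd
  refine ⟨x, hx, fun hle => ?_⟩
  have hmem := hle (mul_pow_mem_conductor hQ hxQ (hxsurj.pow _) (has ▸ ha))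
  rcases Ideal.IsPrime.mem_or_mem inferInstance hmem with hsP | hxkP
  · exact hs (Ideal.mem_span_singleton.1 (hp ▸ hsP))
  · exact hxP (Ideal.IsPrime.mem_of_pow_mem inferInstance _ hxkP)

end LocalGenerators

section DisplacementIdeal

theorem adjoin_le_restrictScalars_adjoin (R A : Type*) {B : Type*} [CommRing R] [CommRing A]
    [CommRing B] [Algebra R A] [Algebra R B] [Algebra A B] [IsScalarTower R A B] (s : Set B) :
    Algebra.adjoin R s ≤ (Algebra.adjoin A s).restrictScalars R :=
  Algebra.adjoin_le Algebra.subset_adjoin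

theorem conductor_le_conductor_of_tower (R A : Type*) {B : Type*} [CommRing R] [CommRing A]
    [CommRing B] [Algebra R A] [Algebra R B] [Algebra A B] [IsScalarTower R A B] (x : B) :
    conductor R x ≤ conductor A x := fun _ hc =>
  mem_conductor_iff.2 fun b => adjoin_le_restrictScalars_adjoin R A {x} (mem_conductor_iff.1 hc b)

theorem le_of_forall_isMaximal_exists_mul_le {B : Type*} [CommRing B] {I J : Ideal B}
    (h : ∀ P : Ideal B, P.IsMaximal → ∃ C : Ideal B, ¬ C ≤ P ∧ C * I ≤ J) : I ≤ J := by
  by_contra hIJ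
  obtain ⟨P, hP, hle⟩ := Ideal.exists_le_maximal (Submodule.colon J I)
    (mt (Submodule.colon_eq_top_iff_subset _).1 hIJ)
  obtain ⟨C, hCP, hC⟩ := h P hP
  exact hCP fun c hc => hle <| Submodule.mem_colon.2 fun b hb => hC (Ideal.mul_mem_mul hc hb)

variable {G B R : Type*} [CommRing B] [Group G] [MulSemiringAction G B] [CommRing R] [Algebra R B]
  [SMulCommClass G R B]

/-- The ideal generated by the displacements `b - g • b` of the elements of `B` under `g`
(Hilbert's *Element* of `g`): it lies in an ideal `I` exactly when `b` and `g • b` are congruent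
modulo `I` for all `b`. -/
def displacementIdeal (g : G) : Ideal B :=
  Ideal.span (Set.range fun b => b - g • b)

theorem sub_smul_dvd_sub_smul_of_mem_adjoin (g : G) {x z : B} (hz : z ∈ Algebra.adjoin R {x}) :
    x - g • x ∣ z - g • z := by
  obtain ⟨f, rfl⟩ := Algebra.adjoin_mem_exists_aeval R x hz
  have hg : g • Polynomial.aeval x f = Polynomial.aeval (g • x) f :=
    (Polynomial.aeval_algHom_apply (MulSemiringAction.toAlgHom R B g) x f).symm
  rw [hg]
  simp only [← Polynomial.eval_map_algebraMap]
  exact Polynomial.sub_dvd_eval_sub _ _ _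

variable (R) in
theorem conductor_mul_displacementIdeal_le (g : G) (x : B) :
    conductor R x * displacementIdeal g ≤ Ideal.span {x - g • x} := by
  rw [displacementIdeal, Ideal.mul_le]
  intro c hc d hd
  induction hd using Submodule.span_induction with
  | mem d hd =>
    obtain ⟨b, rfl⟩ := hd
    have hcb := sub_smul_dvd_sub_smul_of_mem_adjoin g (mem_conductor_iff.1 hc b)
    have hc1 := sub_smul_dvd_sub_smul_of_mem_adjoin g (conductor_subset_adjoin hc)
    have hsplit : c * (b - g • b) = (c * b - g • (c * b)) - (c - g • c) * (g • b) := by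
      rw [smul_mul']
      ring
    rw [Ideal.mem_span_singleton, hsplit]
    exact dvd_sub hcb (hc1.mul_right _)
  | zero => rw [mul_zero]; exact zero_mem _
  | add u v _ _ hu hv => rw [mul_add]; exact add_mem hu hv
  | smul a u _ hu => rw [smul_eq_mul, mul_left_comm]; exact Ideal.mul_mem_left _ a hu

end DisplacementIdeal

section Different

section Galois

open Polynomial

variable {K L : Type*} [Field K] [Field L] [Algebra K L] [FiniteDimensional K L] [IsGalois K L]

theorem minpoly_map_eq_prod_of_adjoin_eq_top {x : L} (hx : Algebra.adjoin K {x} = ⊤) :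
    (minpoly K x).map (algebraMap K L) = ∏ σ : Gal(L/K), (X - C (σ x)) := by
  have hinj : Function.Injective fun σ : Gal(L/K) => σ x := fun σ τ h =>
    AlgEquiv.coe_toAlgHom_injective (AlgHom.ext_of_adjoin_eq_top hx (Set.eqOn_singleton.2 h))
  have hmonic : (∏ σ : Gal(L/K), (X - C (σ x))).Monic :=
    monic_prod_of_monic _ _ fun σ _ => monic_X_sub_C (σ x)
  refine eq_of_monic_of_dvd_of_natDegree_le hmonic
    ((minpoly.monic (IsGalois.integral K x)).map _) ?_ ?_
  · refine Finset.prod_dvd_of_coprime (fun σ _ τ _ h => pairwise_coprime_X_sub_C hinj h)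
      fun σ _ => ?_
    rw [dvd_iff_isRoot, IsRoot, eval_map_algebraMap]
    exact (aeval_algHom_apply (σ : L →ₐ[K] L) x _).trans (by rw [minpoly.aeval, map_zero])
  · rw [natDegree_map, (Field.primitive_element_iff_minpoly_natDegree_eq K x).1
      (IntermediateField.adjoin_eq_top_of_algebra K _ hx), natDegree_finsetProd_X_sub_C_eq_card,
      Finset.card_univ, ← IsGalois.card_aut_eq_finrank, Nat.card_eq_fintype_card]

open scoped Classical in
theorem aeval_derivative_minpoly_eq_prod {x : L} (hx : Algebra.adjoin K {x} = ⊤) :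
    aeval x (derivative (minpoly K x)) = ∏ σ ∈ Finset.univ.erase (1 : Gal(L/K)), (x - σ x) := by
  rw [← eval_map_algebraMap, ← derivative_map, minpoly_map_eq_prod_of_adjoin_eq_top hx,
    ← Finset.mul_prod_erase _ _ (Finset.mem_univ (1 : Gal(L/K))), derivative_mul]
  simp [eval_prod]

end Galois

variable {N : Type*} [Field N] [NumberField N] (K : Type*) [Field K]
  [NumberField K] [Algebra K N] [IsGalois K N]

open scoped Classical in
theorem conductor_mul_differentIdeal_eq_prod {x : 𝓞 N} (hx : Algebra.adjoin ℚ {(x : N)} = ⊤) :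
    conductor (𝓞 K) x * differentIdeal (𝓞 K) (𝓞 N) =
      ∏ σ ∈ Finset.univ.erase (1 : Gal(N/K)), Ideal.span {x - σ • x} := by
  have hxK : Algebra.adjoin K {(x : N)} = ⊤ :=
    top_unique fun z _ => adjoin_le_restrictScalars_adjoin ℚ K _ (hx ▸ Algebra.mem_top (x := z))
  rw [conductor_mul_differentIdeal (𝓞 K) K N x hxK, Ideal.prod_span_singleton]
  congr 2
  apply NumberField.RingOfIntegers.coe_injective
  rw [← Polynomial.aeval_algebraMap_apply, ← Polynomial.aeval_map_algebraMap K,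
    ← Polynomial.derivative_map, ← minpoly.isIntegrallyClosed_eq_field_fractions K N
      (Algebra.IsIntegral.isIntegral x), aeval_derivative_minpoly_eq_prod hxK, map_prod]
  rfl

open scoped Classical in
theorem differentIdeal_eq_prod_displacementIdeal :
    differentIdeal (𝓞 K) (𝓞 N) =
      ∏ σ ∈ Finset.univ.erase (1 : Gal(N/K)), displacementIdeal σ := by
  have exists_conductor (P : Ideal (𝓞 N)) (hP : P.IsMaximal) :=
    exists_adjoin_eq_top_and_not_conductor_le (hP.ne_bot_of_isIntegral_int P)
  apply le_antisymm <;> refine le_of_forall_isMaximal_exists_mul_le fun P hP => ?_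
  · obtain ⟨x, hx, hxP⟩ := exists_conductor P hP
    refine ⟨conductor ℤ x, hxP, ?_⟩
    calc conductor ℤ x * differentIdeal (𝓞 K) (𝓞 N)
        ≤ conductor (𝓞 K) x * differentIdeal (𝓞 K) (𝓞 N) :=
          Ideal.mul_mono_left (conductor_le_conductor_of_tower ℤ (𝓞 K) x)
      _ = ∏ σ ∈ Finset.univ.erase (1 : Gal(N/K)), Ideal.span {x - σ • x} :=
          conductor_mul_differentIdeal_eq_prod K hx
      _ ≤ ∏ σ ∈ Finset.univ.erase (1 : Gal(N/K)), displacementIdeal σ :=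
          Finset.prod_le_prod' fun σ _ => Ideal.span_mono (by simp)
  · obtain ⟨x, hx, hxP⟩ := exists_conductor P hP
    refine ⟨conductor ℤ x ^ (Finset.univ.erase (1 : Gal(N/K))).card,
      fun h => hxP (Ideal.IsPrime.le_of_pow_le h), ?_⟩
    calc conductor ℤ x ^ (Finset.univ.erase (1 : Gal(N/K))).card *
          ∏ σ ∈ Finset.univ.erase (1 : Gal(N/K)), displacementIdeal σ
        = ∏ σ ∈ Finset.univ.erase (1 : Gal(N/K)), (conductor ℤ x * displacementIdeal σ) := by
          rw [Finset.prod_mul_distrib, Finset.prod_const]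
      _ ≤ ∏ σ ∈ Finset.univ.erase (1 : Gal(N/K)), Ideal.span {x - σ • x} :=
          Finset.prod_le_prod' fun σ _ => conductor_mul_displacementIdeal_le ℤ σ x
      _ = conductor (𝓞 K) x * differentIdeal (𝓞 K) (𝓞 N) :=
          (conductor_mul_differentIdeal_eq_prod K hx).symm
      _ ≤ differentIdeal (𝓞 K) (𝓞 N) := Ideal.mul_le_right

end Different

section Discriminant

open NumberField

variable {K N : Type*} [Field K] [NumberField K] [Field N] [NumberField N]

variable (K N) in
open scoped Classical in
theorem natAbs_discr_eq_prod_mul_pow [Algebra K N] [IsGalois K N] :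
    (discr N).natAbs = (∏ σ ∈ Finset.univ.erase (1 : Gal(N/K)),
      (displacementIdeal (B := 𝓞 N) σ).absNorm) * (discr K).natAbs ^ Module.finrank K N := by
  rw [natAbs_discr_eq_absNorm_differentIdeal_mul_natAbs_discr_pow K (𝓞 K) N (𝓞 N),
    differentIdeal_eq_prod_displacementIdeal K, map_prod]

variable [IsGalois ℚ N]

open scoped Classical in
theorem natAbs_discr_pow_eq_prod_filter (φ : K →ₐ[ℚ] N) :
    (discr K).natAbs ^ (Module.finrank ℚ N / Module.finrank ℚ K) =
      ∏ σ : Gal(N/ℚ) with σ • φ ≠ φ, (displacementIdeal (B := 𝓞 N) σ).absNorm := by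
  let := φ.toRingHom.toAlgebra
  have : IsGalois K N := .tower_top_of_isGalois ℚ K N
  have hφ : IsScalarTower.toAlgHom ℚ K N = φ := AlgHom.ext fun _ => rfl
  have hN := natAbs_discr_eq_prod_mul_pow ℚ N
  rw [discr_rat, Int.natAbs_one, one_pow, mul_one, ← Finset.prod_filter_mul_prod_filter_not _
    (fun σ : Gal(N/ℚ) => σ • φ = φ)] at hN
  have hfix := prod_restrictScalars_eq_prod_filter (K := K)
    fun σ : Gal(N/ℚ) => (displacementIdeal (B := 𝓞 N) σ).absNorm
  rw [hφ] at hfix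
  have hK := (natAbs_discr_eq_prod_mul_pow K N).trans (congrArg (· * _) hfix)
  have hmoved : (Finset.univ.erase (1 : Gal(N/ℚ))).filter (¬ · • φ = φ) =
      Finset.univ.filter (· • φ ≠ φ) := by
    rw [Finset.filter_erase, Finset.erase_eq_of_notMem (by simp)]
  rw [← Module.finrank_mul_finrank ℚ K N, Nat.mul_div_cancel_left _ Module.finrank_pos, ← hmoved]
  refine Nat.eq_of_mul_eq_mul_left (Nat.pos_of_ne_zero fun h0 => ?_) (hK.symm.trans hN)
  rw [h0, zero_mul, Int.natAbs_eq_zero] at hN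
  exact discr_ne_zero N hN

open scoped Classical in
theorem natAbs_discr_pow_finrank_eq_prod [Algebra K N] :
    (discr K).natAbs ^ Module.finrank ℚ N =
      ∏ σ : Gal(N/ℚ), (displacementIdeal (B := 𝓞 N) σ).absNorm ^
        (toPermHom _ (K →ₐ[ℚ] N) σ).support.card := by
  calc (discr K).natAbs ^ Module.finrank ℚ N
      = ∏ _φ : K →ₐ[ℚ] N, (discr K).natAbs ^ (Module.finrank ℚ N / Module.finrank ℚ K) := by
        rw [Finset.prod_const, Finset.card_univ, card_embedding_eq_finrank, ← pow_mul,
          Nat.div_mul_cancel ⟨_, (Module.finrank_mul_finrank ℚ K N).symm⟩]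
    _ = ∏ φ : K →ₐ[ℚ] N, ∏ σ : Gal(N/ℚ) with σ • φ ≠ φ,
          (displacementIdeal (B := 𝓞 N) σ).absNorm :=
        Finset.prod_congr rfl fun φ _ => natAbs_discr_pow_eq_prod_filter φ
    _ = ∏ σ : Gal(N/ℚ), ∏ φ : K →ₐ[ℚ] N with σ • φ ≠ φ,
          (displacementIdeal (B := 𝓞 N) σ).absNorm :=
        Finset.prod_comm' (by simp)
    _ = _ := Finset.prod_congr rfl fun σ _ => Finset.prod_const _

variable {L : Type*} [Field L] [NumberField L] [Algebra K N] [Algebra L N]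

open scoped Classical in
theorem discr_dvd_discr_of_card_support_le
    (hsupport : ∀ σ : Gal(N/ℚ), (toPermHom _ (K →ₐ[ℚ] N) σ).support.card ≤
      (toPermHom _ (L →ₐ[ℚ] N) σ).support.card) : discr K ∣ discr L := by
  rw [← Int.natAbs_dvd_natAbs, ← Nat.pow_dvd_pow_iff (Module.finrank_pos (R := ℚ) (M := N)).ne',
    natAbs_discr_pow_finrank_eq_prod, natAbs_discr_pow_finrank_eq_prod]
  exact Finset.prod_dvd_prod_of_dvd _ _ fun σ _ => pow_dvd_pow _ (hsupport σ)

theorem exists_eq_mul_sq_of_dvd_of_isSquare_mul {a b : ℤ} (ha : a ≠ 0) (hdvd : a ∣ b)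
    (hsq : IsSquare (a * b)) : ∃ r, b = a * r ^ 2 := by
  obtain ⟨c, rfl⟩ := hdvd
  obtain ⟨m, hm⟩ := hsq
  obtain ⟨r, rfl⟩ : a ∣ m := by
    rw [← Int.pow_dvd_pow_iff two_ne_zero]
    exact ⟨c, by linear_combination -hm⟩
  exact ⟨r, mul_left_cancel₀ ha (by linear_combination hm)⟩

open scoped Classical in
theorem exists_discr_eq_discr_mul_sq
    (hsign : ∀ σ : Gal(N/ℚ), Perm.sign (toPermHom _ (K →ₐ[ℚ] N) σ) =
      Perm.sign (toPermHom _ (L →ₐ[ℚ] N) σ))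
    (hsupport : ∀ σ : Gal(N/ℚ), (toPermHom _ (K →ₐ[ℚ] N) σ).support.card ≤
      (toPermHom _ (L →ₐ[ℚ] N) σ).support.card) :
    ∃ r : ℤ, r ≠ 0 ∧ discr L = discr K * r ^ 2 := by
  obtain ⟨r, hr⟩ := exists_eq_mul_sq_of_dvd_of_isSquare_mul (discr_ne_zero K)
    (discr_dvd_discr_of_card_support_le hsupport)
    (isSquare_numberFieldDiscr_mul_numberFieldDiscr hsign)
  refine ⟨r, ?_, hr⟩
  rintro rfl
  exact discr_ne_zero L (by simpa using hr)

end Discriminant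

/-- If `N/ℚ` is Galois with group `A₅` or `S₅` and `K₅`, `K₆` are subfields of `N` of
degrees 5 and 6 over `ℚ`, then `D_{K₆}/D_{K₅}` is the square of a (nonzero) integer. -/
theorem stmt16 (N : Type) [Field N] [NumberField N] [IsGalois ℚ N]
    (hgal : Nonempty ((N ≃ₐ[ℚ] N) ≃* alternatingGroup (Fin 5)) ∨
            Nonempty ((N ≃ₐ[ℚ] N) ≃* Equiv.Perm (Fin 5)))
    (K₅ K₆ : IntermediateField ℚ N)
    (h5 : Module.finrank ℚ K₅ = 5) (h6 : Module.finrank ℚ K₆ = 6) :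
    ∃ r : ℤ, r ≠ 0 ∧ NumberField.discr K₆ = NumberField.discr K₅ * r ^ 2 := by
  classical
  have hcard5 : Fintype.card (K₅ →ₐ[ℚ] N) = 5 := card_embedding_eq_finrank.trans h5
  have hcard6 : Fintype.card (K₆ →ₐ[ℚ] N) = 6 := card_embedding_eq_finrank.trans h6
  have : FaithfulSMul Gal(N/ℚ) (K₅ →ₐ[ℚ] N) :=
    faithfulSMul_of_isPretransitive (by simp) hgal (by simp [hcard5])
  have : FaithfulSMul Gal(N/ℚ) (K₆ →ₐ[ℚ] N) :=
    faithfulSMul_of_isPretransitive (by simp) hgal (by simp [hcard6])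
  have hsign (σ : Gal(N/ℚ)) := sign_toPermHom_eq_of_card_le_six hgal
    (X := K₅ →ₐ[ℚ] N) (by simp [hcard5]) (Y := K₆ →ₐ[ℚ] N) (by simp [hcard6]) σ
  have hdvd : Nat.card Gal(N/ℚ) ∣ 120 := by
    simpa [Nat.factorial] using card_dvd_factorial_of_mulEquiv hgal
  exact exists_discr_eq_discr_mul_sq hsign fun σ =>
    card_support_le_card_support_of_sign_eq hdvd hcard5 hcard6 (hsign σ)
end
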